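/- arXiv:1907.03662 — 16 statements merged into one kernel-verified Lean document; each statement's English description precedes it below -/
import Mathlib

section
/- Let 𝔤 be a finite-dimensional real Lie algebra with an inner product ⟨·,·⟩ and Levi-Civita product ∇^𝔤, and let T be a skew-symmetric endomorphism of 𝔤 (⟨Tx,y⟩ = −⟨x,Ty⟩ for all x,y) satisfying the Killing–Yano equation on 𝔤. If 𝔲 ⊆ 𝔤 is a Lie subalgebra with T(𝔲) ⊆ 𝔲, and ∇^𝔲 denotes the Levi-Civita product of 𝔲 with the restricted inner product, then the restriction T|_𝔲 satisfies the Killing–Yano equation on 𝔲: ∇^𝔲_x(Ty) − T(∇^𝔲_x y) + ∇^𝔲_y(Tx) − T(∇^𝔲_y x) = 0 for all x,y ∈ 𝔲. -/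
/-- `x` belongs to the center of the Lie algebra `V`. -/
def IsCentral {V : Type*} [LieRing V] (x : V) : Prop := ∀ y : V, ⁅x, y⁆ = 0

/-- Membership in `𝔳 = 𝔷^⊥`, the orthogonal complement of the center with respect to the
inner product `B`. -/
def InVperp {V : Type*} [LieRing V] [LieAlgebra ℝ V]
    (B : V →ₗ[ℝ] V →ₗ[ℝ] ℝ) (x : V) : Prop :=
  ∀ z : V, IsCentral z → B x z = 0

/-- The Lie algebra `V` is 2-step nilpotent: non-abelian and `⁅⁅V,V⁆,V⁆ = 0`. -/
def TwoStepNilpotent (V : Type*) [LieRing V] : Prop :=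
  (∃ x y : V, ⁅x, y⁆ ≠ 0) ∧ ∀ x y z : V, ⁅⁅x, y⁆, z⁆ = 0

/-- A Killing–Yano tensor on `(V, B)`: a skew-symmetric endomorphism preserving the center
and satisfying `T⁅x,y⁆ = 3⁅Tx,y⁆` for `x, y ∈ 𝔳 = 𝔷^⊥`. -/
def IsKY {V : Type*} [LieRing V] [LieAlgebra ℝ V]
    (B : V →ₗ[ℝ] V →ₗ[ℝ] ℝ) (T : V →ₗ[ℝ] V) : Prop :=
  (∀ x y : V, B (T x) y = - B x (T y)) ∧
  (∀ z : V, IsCentral z → IsCentral (T z)) ∧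
  (∀ x y : V, InVperp B x → InVperp B y → T ⁅x, y⁆ = (3 : ℝ) • ⁅T x, y⁆)

/-- The Koszul formula characterizing the Levi-Civita product of `(V, B)`. -/
def IsLeviCivita {V : Type*} [LieRing V] [LieAlgebra ℝ V]
    (B : V →ₗ[ℝ] V →ₗ[ℝ] ℝ) (nab : V → V → V) : Prop :=
  ∀ x y z : V, 2 * B (nab x y) z = B ⁅x, y⁆ z - B ⁅y, z⁆ x + B ⁅z, x⁆ y
/-- the restriction of a Killing-Yano tensor to a T-invariant Lie
subalgebra satisfies the Killing-Yano equation of the subalgebra. -/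
theorem statement_1 (V : Type*) [LieRing V] [LieAlgebra ℝ V] [FiniteDimensional ℝ V]
    (B : V →ₗ[ℝ] V →ₗ[ℝ] ℝ)
    (hsymm : ∀ x y : V, B x y = B y x) (hpos : ∀ x : V, x ≠ 0 → 0 < B x x)
    (nab : V → V → V) (hLC : IsLeviCivita B nab)
    (T : V →ₗ[ℝ] V) (hskew : ∀ x y : V, B (T x) y = - B x (T y))
    (hKYeq : ∀ x y : V, nab x (T y) - T (nab x y) + nab y (T x) - T (nab y x) = 0)
    (U : LieSubalgebra ℝ V) (hTU : ∀ x ∈ U, T x ∈ U)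
    (nabU : U → U → U)
    (hLCU : ∀ x y z : U, 2 * B (nabU x y : V) (z : V) =
        B ⁅(x : V), (y : V)⁆ (z : V) - B ⁅(y : V), (z : V)⁆ (x : V)
          + B ⁅(z : V), (x : V)⁆ (y : V))
    (TU : U → U) (hTUdef : ∀ u : U, (TU u : V) = T u) :
    ∀ x y : U, nabU x (TU y) - TU (nabU x y) + nabU y (TU x) - TU (nabU y x) = 0 := by
  have key : ∀ a b c : U, B (nabU a b : V) (c : V) = B (nab a b) (c : V) := by
    intro a b c
    have h1 := hLCU a b c
    have h2 := hLC a b c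
    linarith
  intro x y
  have hz : ∀ z : U, B ((nabU x (TU y) - TU (nabU x y) + nabU y (TU x) - TU (nabU y x) : U) : V)
      (z : V) = 0 := by
    intro z
    have h := congrArg (fun v => B v (z : V)) (hKYeq x y)
    have k1 := key x (TU y) z
    have k2 := key x y (TU z)
    have k3 := key y (TU x) z
    have k4 := key y x (TU z)
    simp only [hTUdef] at k1 k2 k3 k4
    simp only [map_add, map_sub, LinearMap.add_apply, LinearMap.sub_apply, map_zero,
      LinearMap.zero_apply, hskew] at h
    push_cast
    simp only [map_add, map_sub, LinearMap.add_apply, LinearMap.sub_apply, hTUdef, hskew]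
    linarith
  by_contra hne
  have hp := hpos _ (fun h => hne (Subtype.ext h))
  exact absurd (hz _) hp.ne'
end

section
/- Let 𝔫 be a finite-dimensional real Lie algebra with inner product ⟨·,·⟩ which is 2-step nilpotent, let 𝔷 be its center and 𝔳 = 𝔷^⊥, and let T be a skew-symmetric endomorphism of 𝔫. Then T satisfies the Killing–Yano equation (with respect to the Levi-Civita product ∇ of (𝔫,⟨·,·⟩)) if and only if T(𝔷) ⊆ 𝔷 (hence also T(𝔳) ⊆ 𝔳) and T⁅x,y⁆ = 3⁅Tx,y⁆ for all x,y ∈ 𝔳. -/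
/-- Orthogonal decomposition along the center. -/
theorem exists_central_part {V : Type*} [LieRing V] [LieAlgebra ℝ V] [FiniteDimensional ℝ V]
    (B : V →ₗ[ℝ] V →ₗ[ℝ] ℝ) (hpos : ∀ x : V, x ≠ 0 → 0 < B x x) (x : V) :
    ∃ c : V, IsCentral c ∧ InVperp B (x - c) := by
  let W : Submodule ℝ V :=
    { carrier := {x | IsCentral x}
      add_mem' := fun {a b} ha hb y => by rw [add_lie, ha y, hb y, add_zero]
      zero_mem' := fun y => zero_lie y
      smul_mem' := fun r a ha y => by rw [smul_lie, ha y, smul_zero] }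
  let f : W →ₗ[ℝ] (Module.Dual ℝ W) := B.domRestrict₁₂ W W
  have hf : Function.Injective f := by
    rw [← LinearMap.ker_eq_bot, LinearMap.ker_eq_bot']
    intro m hm
    by_contra hne
    have h1 : f m m = 0 := by rw [hm]; rfl
    have h2 : B m m = 0 := h1
    have h3 : (m : V) ≠ 0 := fun h => hne (Subtype.ext h)
    exact (hpos m h3).ne' h2
  have hs : Function.Surjective f :=
    (LinearMap.injective_iff_surjective_of_finrank_eq_finrank
      (Subspace.dual_finrank_eq).symm).1 hf
  obtain ⟨c, hc⟩ := hs ((B x).domRestrict W)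
  refine ⟨c, c.2, fun z hz => ?_⟩
  have h := LinearMap.congr_fun hc ⟨z, hz⟩
  have h' : B c z = B x z := h
  rw [map_sub, LinearMap.sub_apply, h', sub_self]

/-- on a 2-step nilpotent metric Lie algebra, a skew-symmetric
endomorphism T satisfies the Killing-Yano equation iff T(𝔷) ⊆ 𝔷 (hence T(𝔳) ⊆ 𝔳)
and T⁅x,y⁆ = 3⁅Tx,y⁆ for all x,y ∈ 𝔳. -/
theorem statement_2 (V : Type*) [LieRing V] [LieAlgebra ℝ V] [FiniteDimensional ℝ V]
    (B : V →ₗ[ℝ] V →ₗ[ℝ] ℝ)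
    (hsymm : ∀ x y : V, B x y = B y x) (hpos : ∀ x : V, x ≠ 0 → 0 < B x x)
    (h2 : TwoStepNilpotent V)
    (nab : V → V → V) (hLC : IsLeviCivita B nab)
    (T : V →ₗ[ℝ] V) (hskew : ∀ x y : V, B (T x) y = - B x (T y)) :
    (∀ x y : V, nab x (T y) - T (nab x y) + nab y (T x) - T (nab y x) = 0) ↔
      ((∀ z : V, IsCentral z → IsCentral (T z)) ∧
       (∀ x : V, InVperp B x → InVperp B (T x)) ∧
       (∀ x y : V, InVperp B x → InVperp B y → T ⁅x, y⁆ = (3 : ℝ) • ⁅T x, y⁆)) := by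
  obtain ⟨-, h2⟩ := h2
  have hnd : ∀ u : V, B u u = 0 → u = 0 := fun u hu => by
    by_contra h
    exact (hpos u h).ne' hu
  have hsk : ∀ x y : V, ⁅x, y⁆ = -⁅y, x⁆ := fun x y => (lie_skew x y).symm
  have key : ∀ x y w : V, 2 * B (nab x (T y) - T (nab x y) + nab y (T x) - T (nab y x)) w =
      B ⁅x, T y⁆ w + B ⁅y, T x⁆ w - B ⁅T y, w⁆ x - B ⁅T x, w⁆ y + B ⁅w, x⁆ (T y)
        + B ⁅w, y⁆ (T x) + 2 * B ⁅T w, y⁆ x + 2 * B ⁅T w, x⁆ y := by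
    intro x y w
    have e1 := hLC x (T y) w
    have e2 := hLC x y (T w)
    have e3 := hLC y (T x) w
    have e4 := hLC y x (T w)
    rw [hsk y (T w)] at e2
    rw [hsk x (T w), hsk y x] at e4
    simp only [map_sub, map_add, map_neg, LinearMap.sub_apply, LinearMap.add_apply,
      LinearMap.neg_apply, hskew (nab x y), hskew (nab y x)] at e1 e2 e3 e4 ⊢
    linarith
  constructor
  · intro hKY
    have hE : ∀ x y w : V, B ⁅x, T y⁆ w + B ⁅y, T x⁆ w - B ⁅T y, w⁆ x - B ⁅T x, w⁆ y
        + B ⁅w, x⁆ (T y) + B ⁅w, y⁆ (T x) + 2 * B ⁅T w, y⁆ x + 2 * B ⁅T w, x⁆ y = 0 := by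
      intro x y w
      rw [← key, hKY]
      simp
    have hr : ∀ z : V, IsCentral z → ∀ y : V, ⁅y, z⁆ = 0 := fun z hz y => by
      rw [hsk, hz y, neg_zero]
    have ha : ∀ z z' y : V, IsCentral z → IsCentral z' →
        B ⁅T z, y⁆ z' = 2 * B ⁅T z', y⁆ z := by
      intro z z' y hz hz'
      have h := hE z y z'
      rw [hsk y (T z), hz (T y), hr z' hz' (T y), hr z' hz' (T z), hz' z, hz' y,
        hr z hz (T z')] at h
      simp only [map_zero, map_neg, LinearMap.zero_apply, LinearMap.neg_apply] at h
      linarith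
    have hTz : ∀ z : V, IsCentral z → IsCentral (T z) := by
      intro z hz y
      have hc : IsCentral ⁅T z, y⁆ := h2 _ _
      have h1 := ha z _ y hz hc
      have h3 := ha _ z y hc hz
      exact hnd _ (by linarith)
    refine ⟨hTz, fun x hx z hz => ?_, ?_⟩
    · rw [hskew, hx _ (hTz z hz), neg_zero]
    have hb : ∀ w y : V, T ⁅w, y⁆ = (2 : ℝ) • ⁅T w, y⁆ + ⁅w, T y⁆ := by
      intro w y
      have hc : IsCentral (T ⁅w, y⁆ - ((2 : ℝ) • ⁅T w, y⁆ + ⁅w, T y⁆)) := by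
        intro u
        rw [sub_lie, add_lie, smul_lie, h2, h2, hTz _ (h2 w y)]
        simp
      rw [← sub_eq_zero]
      set z := T ⁅w, y⁆ - ((2 : ℝ) • ⁅T w, y⁆ + ⁅w, T y⁆) with hzdef
      have h := hE z y w
      rw [hsk y (T z), hc (T y), hTz z hc y, hTz z hc w, hr z hc w, hr z hc (T w),
        hsk (T y) w] at h
      have hq := hskew ⁅w, y⁆ z
      simp only [map_zero, map_neg, LinearMap.zero_apply, LinearMap.neg_apply] at h
      apply hnd
      nth_rewrite 1 [hzdef]
      simp only [map_sub, map_add, map_smul, LinearMap.sub_apply, LinearMap.add_apply,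
        LinearMap.smul_apply, smul_eq_mul]
      linarith
    intro x y _ _
    have h1 := hb x y
    have h3 := hb y x
    rw [hsk y x, map_neg, hsk (T y) x, hsk y (T x), h1] at h3
    have h4 : ⁅x, T y⁆ = ⁅T x, y⁆ := by
      rw [← sub_eq_zero] at h3 ⊢
      rw [← h3]
      module
    rw [h1, h4]
    module
  · rintro ⟨hTz, -, hT⟩ x y
    have hr : ∀ z : V, IsCentral z → ∀ y : V, ⁅y, z⁆ = 0 := fun z hz y => by
      rw [hsk, hz y, neg_zero]
    have hall : ∀ x y : V, T ⁅x, y⁆ = (3 : ℝ) • ⁅T x, y⁆ := by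
      intro x y
      obtain ⟨c, hc, hxc⟩ := exists_central_part B hpos x
      obtain ⟨d, hd, hyd⟩ := exists_central_part B hpos y
      have h := hT _ _ hxc hyd
      simpa only [map_sub, sub_lie, lie_sub, hc _, hr d hd, hTz c hc _, sub_zero] using h
    have hsw : ∀ x y : V, ⁅x, T y⁆ = ⁅T x, y⁆ := by
      intro x y
      have h1 := hall x y
      have h3 := hall y x
      rw [hsk y x, map_neg, hsk (T y) x, h1, smul_neg, neg_inj] at h3
      exact (smul_right_injective V (three_ne_zero : (3 : ℝ) ≠ 0) h3).symm
    apply hnd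
    set w := nab x (T y) - T (nab x y) + nab y (T x) - T (nab y x) with hw
    have h := key x y w
    rw [← hw] at h
    have q1 := hskew ⁅w, x⁆ y
    have q2 := hskew ⁅w, y⁆ x
    rw [hall] at q1 q2
    rw [hsk y (T x), hsw x y, hsk (T y) w, hsk (T x) w, hsw w y, hsw w x] at h
    simp only [map_neg, map_smul, LinearMap.neg_apply, LinearMap.smul_apply, smul_eq_mul]
      at h q1 q2
    linarith
end

section
/- Let 𝔫 be a 2-step nilpotent finite-dimensional real Lie algebra with inner product ⟨·,·⟩, with center 𝔷 and 𝔳 = 𝔷^⊥. Then there is no Killing–Yano tensor J on (𝔫,⟨·,·⟩) satisfying J² = −Id. In particular, there are no nearly Kähler structures on 2-step nilpotent Lie algebras. -/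
/-- there is no Killing-Yano tensor J with J² = -Id on a 2-step
nilpotent metric Lie algebra (no nearly Kähler structures). -/
theorem statement_3 (V : Type*) [LieRing V] [LieAlgebra ℝ V] [FiniteDimensional ℝ V]
    (B : V →ₗ[ℝ] V →ₗ[ℝ] ℝ)
    (hsymm : ∀ x y : V, B x y = B y x) (hpos : ∀ x : V, x ≠ 0 → 0 < B x x)
    (h2 : TwoStepNilpotent V) :
    ¬ ∃ J : V →ₗ[ℝ] V, IsKY B J ∧ ∀ x : V, J (J x) = -x := by
  rintro ⟨J, ⟨hskew, hcen, hky⟩, hJ⟩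
  obtain ⟨⟨a, b, hab⟩, -⟩ := h2
  let Z : Submodule ℝ V :=
    { carrier := {x | IsCentral x}
      add_mem' := by
        intro x y hx hy w
        rw [add_lie, hx w, hy w, add_zero]
      zero_mem' := fun w => zero_lie w
      smul_mem' := by
        intro c x hx w
        rw [smul_lie, hx w, smul_zero] }
  have hrefl : LinearMap.BilinForm.IsRefl B := by
    intro x y h
    rw [hsymm, h]
  have hnd : (LinearMap.BilinForm.restrict B Z).Nondegenerate := by
    have key : ∀ x : Z, B (x : V) (x : V) = 0 → x = 0 := by
      intro x hx
      by_contra hne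
      have := hpos (x : V) (fun h => hne (Subtype.ext h))
      linarith
    exact ⟨fun x hx => key x (hx x), fun x hx => key x (hx x)⟩
  have hcompl := LinearMap.BilinForm.isCompl_orthogonal_of_restrict_nondegenerate hrefl hnd
  have hdec : ∀ x : V, ∃ z v : V, IsCentral z ∧ InVperp B v ∧ z + v = x := by
    intro x
    have hx : x ∈ Z ⊔ LinearMap.BilinForm.orthogonal B Z := by
      rw [hcompl.sup_eq_top]; trivial
    obtain ⟨z, hz, v, hv, h⟩ := Submodule.mem_sup.1 hx
    refine ⟨z, v, hz, fun w hw => ?_, h⟩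
    rw [hsymm]
    exact hv w hw
  have hJv : ∀ x, InVperp B x → InVperp B (J x) := by
    intro x hx z hz
    rw [hskew, hx _ (hcen z hz), neg_zero]
  have hzero : ∀ x y, InVperp B x → InVperp B y → ⁅x, y⁆ = 0 := by
    intro x y hx hy
    have h1 := congrArg J (hky x y hx hy)
    rw [hJ, map_smul, hky _ _ (hJv x hx) hy, hJ, neg_lie] at h1
    have h8 : (8 : ℝ) • ⁅x, y⁆ = 0 := by
      linear_combination (norm := module) h1
    exact (smul_eq_zero.1 h8).resolve_left (by norm_num)
  obtain ⟨z, v, hz, hv, rfl⟩ := hdec a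
  obtain ⟨z', v', hz', hv', rfl⟩ := hdec b
  apply hab
  rw [add_lie, hz, zero_add, lie_add, ← lie_skew, hz', hzero v v' hv hv', neg_zero, add_zero]
end

section
/- Let 𝔫 be a 2-step nilpotent finite-dimensional real Lie algebra with inner product ⟨·,·⟩ and let T be a Killing–Yano tensor on (𝔫,⟨·,·⟩). Then ker T and range T are Lie ideals of 𝔫, they are mutually orthogonal with 𝔫 = ker T ⊕ range T, the subalgebra range T is T-invariant, T restricted to range T is invertible, and T restricted to range T satisfies the Killing–Yano equation with respect to the Levi-Civita product of the metric Lie algebra (range T, ⟨·,·⟩). -/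
/-- Orthogonal decomposition with respect to a positive definite symmetric form. -/
theorem exists_orth_decomp {V : Type*} [AddCommGroup V] [Module ℝ V] [FiniteDimensional ℝ V]
    (B : V →ₗ[ℝ] V →ₗ[ℝ] ℝ)
    (hsymm : ∀ x y : V, B x y = B y x) (hpos : ∀ x : V, x ≠ 0 → 0 < B x x)
    (Z : Submodule ℝ V) (x : V) :
    ∃ z ∈ Z, ∃ v : V, z + v = x ∧ ∀ w ∈ Z, B v w = 0 := by
  have hrefl : LinearMap.IsRefl B := fun a b h => by rw [hsymm, h]
  have hd : Disjoint Z (LinearMap.BilinForm.orthogonal B Z) := by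
    rw [Submodule.disjoint_def]
    intro a ha hb
    by_contra hne
    have h1 := hb a ha
    have h2 := hpos a hne
    exact h2.ne' h1
  have hc := (LinearMap.BilinForm.isCompl_orthogonal_iff_disjoint hrefl).2 hd
  have hx : x ∈ Z ⊔ LinearMap.BilinForm.orthogonal B Z := by rw [hc.sup_eq_top]; trivial
  obtain ⟨z, hz, v, hv, h⟩ := Submodule.mem_sup.1 hx
  exact ⟨z, hz, v, h, fun w hw => by rw [hsymm]; exact hv w hw⟩

/-- The Killing–Yano identity holds for all vectors. -/
theorem ky_global {V : Type*} [LieRing V] [LieAlgebra ℝ V] [FiniteDimensional ℝ V]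
    (B : V →ₗ[ℝ] V →ₗ[ℝ] ℝ)
    (hsymm : ∀ x y : V, B x y = B y x) (hpos : ∀ x : V, x ≠ 0 → 0 < B x x)
    (T : V →ₗ[ℝ] V) (hT : IsKY B T) (x y : V) : T ⁅x, y⁆ = (3 : ℝ) • ⁅T x, y⁆ := by
  obtain ⟨_, hc, hk⟩ := hT
  let Z : Submodule ℝ V :=
    { carrier := {z | IsCentral z}
      add_mem' := fun {a b} ha hb w => by rw [add_lie, ha w, hb w, add_zero]
      zero_mem' := fun w => zero_lie w
      smul_mem' := fun c a ha w => by rw [smul_lie, ha w, smul_zero] }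
  obtain ⟨z, hz, v, rfl, hv⟩ := exists_orth_decomp B hsymm hpos Z x
  obtain ⟨z', hz', v', rfl, hv'⟩ := exists_orth_decomp B hsymm hpos Z y
  have hz : IsCentral z := hz
  have hz' : IsCentral z' := hz'
  have hr : ∀ a, ⁅a, z'⁆ = 0 := fun a => by rw [← lie_skew, hz' a, neg_zero]
  have h1 := hk v v' hv hv'
  rw [map_add, add_lie, add_lie, hz, hc z hz, lie_add, lie_add, hr, hr]
  simpa using h1

/-- for a KY tensor T on a 2-step nilpotent metric Lie algebra,
ker T and range T are orthogonal complementary Lie ideals, range T is T-invariant,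
T restricted to range T is invertible and satisfies the Killing-Yano equation of
the metric Lie algebra range T. -/
theorem statement_4 (V : Type*) [LieRing V] [LieAlgebra ℝ V] [FiniteDimensional ℝ V]
    (B : V →ₗ[ℝ] V →ₗ[ℝ] ℝ)
    (hsymm : ∀ x y : V, B x y = B y x) (hpos : ∀ x : V, x ≠ 0 → 0 < B x x)
    (h2 : TwoStepNilpotent V)
    (T : V →ₗ[ℝ] V) (hT : IsKY B T) :
    (∀ x : V, ∀ y ∈ LinearMap.ker T, ⁅x, y⁆ ∈ LinearMap.ker T) ∧
    (∀ x : V, ∀ y ∈ LinearMap.range T, ⁅x, y⁆ ∈ LinearMap.range T) ∧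
    (∀ x ∈ LinearMap.ker T, ∀ y ∈ LinearMap.range T, B x y = 0) ∧
    LinearMap.ker T ⊓ LinearMap.range T = ⊥ ∧
    LinearMap.ker T ⊔ LinearMap.range T = ⊤ ∧
    (∀ x ∈ LinearMap.range T, T x ∈ LinearMap.range T) ∧
    (∀ x ∈ LinearMap.range T, T x = 0 → x = 0) ∧
    (∀ y ∈ LinearMap.range T, ∃ x ∈ LinearMap.range T, T x = y) ∧
    (∀ nabR : LinearMap.range T → LinearMap.range T → LinearMap.range T,
      (∀ x y z : LinearMap.range T, 2 * B (nabR x y : V) (z : V) =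
          B ⁅(x : V), (y : V)⁆ (z : V) - B ⁅(y : V), (z : V)⁆ (x : V)
            + B ⁅(z : V), (x : V)⁆ (y : V)) →
      ∀ TR : LinearMap.range T → LinearMap.range T,
        (∀ u : LinearMap.range T, (TR u : V) = T u) →
        ∀ x y : LinearMap.range T,
          nabR x (TR y) - TR (nabR x y) + nabR y (TR x) - TR (nabR y x) = 0) := by
  have hg := ky_global B hsymm hpos T hT
  obtain ⟨hsk, -, -⟩ := hT
  have hg' : ∀ x y, ⁅T x, y⁆ = (1 / 3 : ℝ) • T ⁅x, y⁆ := fun x y => by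
    rw [hg, smul_smul]; norm_num
  have horth : ∀ x ∈ LinearMap.ker T, ∀ y ∈ LinearMap.range T, B x y = 0 := by
    rintro x hx _ ⟨w, rfl⟩
    have h := hsk x w
    rw [LinearMap.mem_ker.1 hx] at h
    simp at h
    exact h
  have hdis : LinearMap.ker T ⊓ LinearMap.range T = ⊥ := by
    rw [eq_bot_iff]
    rintro x ⟨hx, hx'⟩
    by_contra hne
    exact (hpos x hne).ne' (horth x hx x hx')
  have htop : LinearMap.ker T ⊔ LinearMap.range T = ⊤ := by
    refine Submodule.eq_top_of_disjoint _ _ ?_ (disjoint_iff.2 hdis)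
    rw [add_comm, LinearMap.finrank_range_add_finrank_ker]
  refine ⟨?_, ?_, horth, hdis, htop, fun x _ => ⟨x, rfl⟩, ?_, ?_, ?_⟩
  · intro x y hy
    rw [LinearMap.mem_ker] at hy ⊢
    rw [← lie_skew, map_neg, hg, hy]
    simp
  · rintro x _ ⟨w, rfl⟩
    refine ⟨(-(1 / 3) : ℝ) • ⁅w, x⁆, ?_⟩
    rw [map_smul, ← lie_skew x (T w), hg', neg_smul]
  · intro x hx h
    have : x ∈ LinearMap.ker T ⊓ LinearMap.range T := ⟨h, hx⟩
    rwa [hdis, Submodule.mem_bot] at this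
  · rintro _ ⟨w, rfl⟩
    have hw : w ∈ LinearMap.ker T ⊔ LinearMap.range T := by rw [htop]; trivial
    obtain ⟨k, hk, r, hr, rfl⟩ := Submodule.mem_sup.1 hw
    exact ⟨r, hr, by rw [map_add, LinearMap.mem_ker.1 hk, zero_add]⟩
  · intro nab hnab TR hTR x y
    set e := nab x (TR y) - TR (nab x y) + nab y (TR x) - TR (nab y x) with he
    have key : ∀ z : LinearMap.range T, B (e : V) (z : V) = 0 := by
      intro z
      have a1 := hnab x (TR y) z
      have a2 := hnab y (TR x) z
      have a3 := hnab x y (TR z)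
      have a4 := hnab y x (TR z)
      have b1 := hsk (nab x y) z
      have b2 := hsk (nab y x) z
      simp only [hTR] at a1 a2 a3 a4
      have hR : ∀ a b : V, ⁅a, T b⁆ = (1 / 3 : ℝ) • T ⁅a, b⁆ := fun a b => by
        rw [← lie_skew, hg', ← smul_neg, ← map_neg, lie_skew]
      have s1 : ⁅(y : V), (x : V)⁆ = -⁅(x : V), (y : V)⁆ := (lie_skew _ _).symm
      have s2 : ⁅(z : V), (x : V)⁆ = -⁅(x : V), (z : V)⁆ := (lie_skew _ _).symm
      have s3 : ⁅(z : V), (y : V)⁆ = -⁅(y : V), (z : V)⁆ := (lie_skew _ _).symm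
      simp only [hR, hg', s1, s2, s3, map_neg, map_smul, LinearMap.smul_apply,
        LinearMap.neg_apply, smul_eq_mul] at a1 a2 a3 a4
      have c1 := hsk ⁅(x : V), (z : V)⁆ y
      have c2 := hsk ⁅(y : V), (z : V)⁆ x
      simp only [he, Submodule.coe_add, Submodule.coe_sub, hTR, map_add, map_sub,
        LinearMap.add_apply, LinearMap.sub_apply]
      linarith
    by_contra hne
    exact (hpos (e : V) (fun h => hne (Subtype.ext h))).ne' (key e)
end

section
/- Let 𝔫 be a 2-step nilpotent finite-dimensional real Lie algebra with inner product ⟨·,·⟩ and let T be a Killing–Yano tensor on (𝔫,⟨·,·⟩). Then T is parallel with respect to the Levi-Civita product of (𝔫,⟨·,·⟩) if and only if range T is an abelian subalgebra of 𝔫 (i.e. ⁅Tx, Ty⁆ = 0 for all x,y ∈ 𝔫). -/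
theorem central_decomp (V : Type*) [LieRing V] [LieAlgebra ℝ V] [FiniteDimensional ℝ V]
    (B : V →ₗ[ℝ] V →ₗ[ℝ] ℝ)
    (hsymm : ∀ x y : V, B x y = B y x) (hpos : ∀ x : V, x ≠ 0 → 0 < B x x) (x : V) :
    ∃ z v : V, IsCentral z ∧ InVperp B v ∧ x = z + v := by
  let W : Submodule ℝ V :=
    { carrier := {z | IsCentral z}
      add_mem' := by
        intro a b ha hb y
        rw [add_lie, ha y, hb y, add_zero]
      zero_mem' := fun y => zero_lie y
      smul_mem' := by
        intro c a ha y
        rw [smul_lie, ha y, smul_zero] }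
  have hrefl : LinearMap.BilinForm.IsRefl B := by
    intro a b h
    rw [hsymm]; exact h
  have hnd : (LinearMap.BilinForm.restrict B W).Nondegenerate := by
    refine ⟨?_, ?_⟩ <;>
    · intro a ha
      by_contra hne
      have h1 := hpos a (fun h => hne (Subtype.ext h))
      have h2 : B a a = 0 := ha a
      linarith
  have hc := LinearMap.BilinForm.isCompl_orthogonal_of_restrict_nondegenerate hrefl hnd
  have hx : x ∈ W ⊔ LinearMap.BilinForm.orthogonal B W := by
    rw [hc.sup_eq_top]; trivial
  obtain ⟨z, hz, v, hv, rfl⟩ := Submodule.mem_sup.1 hx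
  refine ⟨z, v, hz, ?_, rfl⟩
  intro w hw
  rw [hsymm]
  exact hv w hw

theorem ky_all (V : Type*) [LieRing V] [LieAlgebra ℝ V] [FiniteDimensional ℝ V]
    (B : V →ₗ[ℝ] V →ₗ[ℝ] ℝ)
    (hsymm : ∀ x y : V, B x y = B y x) (hpos : ∀ x : V, x ≠ 0 → 0 < B x x)
    (T : V →ₗ[ℝ] V) (hT : IsKY B T) (x y : V) : T ⁅x, y⁆ = (3 : ℝ) • ⁅T x, y⁆ := by
  obtain ⟨z, v, hz, hv, rfl⟩ := central_decomp V B hsymm hpos x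
  obtain ⟨z', v', hz', hv', rfl⟩ := central_decomp V B hsymm hpos y
  have hr : ∀ u : V, ⁅u, z'⁆ = 0 := fun u => by rw [← lie_skew, hz' u, neg_zero]
  have := hT.2.2 v v' hv hv'
  simp only [map_add, add_lie, lie_add, hr, hz _, hT.2.1 z hz _, zero_add, add_zero]
  exact this

/-- a KY tensor T on a 2-step nilpotent metric Lie algebra is parallel
iff range T is an abelian subalgebra, i.e. ⁅Tx, Ty⁆ = 0 for all x, y. -/
theorem statement_5 (V : Type*) [LieRing V] [LieAlgebra ℝ V] [FiniteDimensional ℝ V]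
    (B : V →ₗ[ℝ] V →ₗ[ℝ] ℝ)
    (hsymm : ∀ x y : V, B x y = B y x) (hpos : ∀ x : V, x ≠ 0 → 0 < B x x)
    (h2 : TwoStepNilpotent V)
    (nab : V → V → V) (hLC : IsLeviCivita B nab)
    (T : V →ₗ[ℝ] V) (hT : IsKY B T) :
    (∀ x y : V, nab x (T y) = T (nab x y)) ↔ (∀ x y : V, ⁅T x, T y⁆ = 0) := by
  have hK := ky_all V B hsymm hpos T hT
  obtain ⟨hsk, hTc, -⟩ := hT
  have hd : ∀ x : V, B x x = 0 → x = 0 := by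
    intro x hx
    by_contra h
    have := hpos x h
    linarith
  have hc : ∀ x y : V, ⁅x, T y⁆ = ⁅T x, y⁆ := by
    intro x y
    have h1 := hK x y
    have h3 := hK y x
    rw [← lie_skew, map_neg, h1, ← lie_skew (T y) x, smul_neg] at h3
    have h4 := neg_injective h3
    exact (smul_right_injective V (by norm_num : (3 : ℝ) ≠ 0) h4).symm
  have key : ∀ x y z : V, B (nab x (T y) - T (nab x y)) z =
      -(B ⁅T x, y⁆ z + B ⁅T y, z⁆ x + B ⁅T z, x⁆ y) := by
    intro x y z
    have e1 := hLC x (T y) z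
    have e2 := hLC x y (T z)
    have e3 := hsk (nab x y) z
    have e4 := hsk ⁅z, x⁆ y
    have e5 := hsk ⁅x, y⁆ z
    rw [hK, map_smul] at e4 e5
    rw [hc] at e1 e2
    simp only [LinearMap.smul_apply, smul_eq_mul] at e4 e5
    rw [map_sub, LinearMap.sub_apply]
    linarith
  have main : (∀ x y : V, nab x (T y) = T (nab x y)) ↔ (∀ x y : V, ⁅T x, y⁆ = 0) := by
    constructor
    · intro h x y
      have hz : IsCentral ⁅T x, y⁆ := fun w => h2.2 _ _ _
      have k := key x y ⁅T x, y⁆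
      have e1 : ⁅T y, ⁅T x, y⁆⁆ = 0 := by rw [← lie_skew, hz, neg_zero]
      rw [h, sub_self, e1, hTc _ hz x] at k
      simp only [map_zero, LinearMap.zero_apply, add_zero] at k
      exact hd _ (by linarith)
    · intro h x y
      have k := key x y (nab x (T y) - T (nab x y))
      rw [h, h, h] at k
      simp only [map_zero, LinearMap.zero_apply, add_zero, neg_zero] at k
      exact sub_eq_zero.1 (hd _ k)
  rw [main]
  constructor
  · intro h x y
    exact h x (T y)
  · intro h x y
    have h0 : T (T ⁅x, y⁆) = 0 := by
      rw [hK x y, map_smul, hK, ← hc, h, smul_zero, smul_zero]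
    have h1 : T ⁅x, y⁆ = 0 := by
      apply hd
      rw [hsk, h0, map_zero, neg_zero]
    rw [hK] at h1
    exact (smul_eq_zero.1 h1).resolve_left (by norm_num)
end

section
/- Let 𝔫 be a 2-step nilpotent finite-dimensional real Lie algebra with inner product ⟨·,·⟩ whose center 𝔷 equals the commutator ideal 𝔫' = ⁅𝔫,𝔫⁆, and let T be a Killing–Yano tensor on (𝔫,⟨·,·⟩) which is parallel with respect to the Levi-Civita product. Then T = 0. -/
/-- if the center of a 2-step nilpotent metric Lie algebra equals its
commutator ideal, then any parallel KY tensor vanishes. -/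
theorem statement_6 (V : Type*) [LieRing V] [LieAlgebra ℝ V] [FiniteDimensional ℝ V]
    (B : V →ₗ[ℝ] V →ₗ[ℝ] ℝ)
    (hsymm : ∀ x y : V, B x y = B y x) (hpos : ∀ x : V, x ≠ 0 → 0 < B x x)
    (h2 : TwoStepNilpotent V)
    (hzc : ∀ x : V, IsCentral x ↔ x ∈ Submodule.span ℝ {u : V | ∃ a b : V, u = ⁅a, b⁆})
    (nab : V → V → V) (hLC : IsLeviCivita B nab)
    (T : V →ₗ[ℝ] V) (hT : IsKY B T)
    (hpar : ∀ x y : V, nab x (T y) = T (nab x y)) :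
    T = 0 := by
  obtain ⟨hskew, hTz, hKY⟩ := hT
  have nd : ∀ x : V, (∀ z, B x z = 0) → x = 0 := by
    intro x h
    by_contra hx
    exact absurd (h x) (hpos x hx).ne'
  have hbc : ∀ a b : V, IsCentral ⁅a, b⁆ := fun a b y => h2.2 a b y
  -- decomposition
  have dec : ∀ x : V, ∃ v z : V, InVperp B v ∧ IsCentral z ∧ v + z = x := by
    intro x
    set Z := Submodule.span ℝ {u : V | ∃ a b : V, u = ⁅a, b⁆} with hZ
    have hr : LinearMap.IsRefl B := fun a b h => by rw [hsymm]; exact h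
    have hd : Disjoint Z (LinearMap.BilinForm.orthogonal B Z) := by
      rw [Submodule.disjoint_def]
      intro w hw hw'
      by_contra hne
      exact absurd (hw' w hw) (hpos w hne).ne'
    have hc := (LinearMap.BilinForm.isCompl_orthogonal_iff_disjoint hr).2 hd
    have hx : x ∈ Z ⊔ LinearMap.BilinForm.orthogonal B Z := by
      rw [hc.sup_eq_top]; trivial
    obtain ⟨z, hz, v, hv, rfl⟩ := Submodule.mem_sup.1 hx
    refine ⟨v, z, fun w hw => ?_, (hzc z).2 hz, add_comm _ _⟩
    rw [hsymm]
    exact hv w ((hzc w).1 hw)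
  have hTv : ∀ v, InVperp B v → InVperp B (T v) := by
    intro v hv z hz
    rw [hskew, hv _ (hTz z hz), neg_zero]
  have hnab : ∀ x y z : V, InVperp B x → InVperp B y → 2 * B (nab x y) z = B ⁅x, y⁆ z := by
    intro x y z hx hy
    rw [hLC, hsymm ⁅y, z⁆, hsymm ⁅z, x⁆, hx _ (hbc _ _), hy _ (hbc _ _)]
    ring
  have h1 : ∀ x y : V, InVperp B x → InVperp B y → ⁅x, T y⁆ = T ⁅x, y⁆ := by
    intro x y hx hy
    rw [← sub_eq_zero]
    apply nd
    intro z
    have e1 := hnab x (T y) z hx (hTv y hy)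
    have e2 := hnab x y (T z) hx hy
    rw [hpar, hskew] at e1
    rw [map_sub, LinearMap.sub_apply, hskew]
    linarith
  have h3 : ∀ x y : V, InVperp B x → InVperp B y → T ⁅x, y⁆ = 0 := by
    intro x y hx hy
    have e := hKY y x hy hx
    rw [← lie_skew y x, ← lie_skew (T y) x, map_neg, h1 x y hx hy] at e
    have e' : (2 : ℝ) • T ⁅x, y⁆ = 0 := by
      have : (2 : ℝ) • T ⁅x, y⁆ = -T ⁅x, y⁆ - (3 : ℝ) • (-T ⁅x, y⁆) := by module
      rw [this]; exact sub_eq_zero.2 e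
    exact (smul_eq_zero.1 e').resolve_left two_ne_zero
  have cr : ∀ z x : V, IsCentral z → ⁅x, z⁆ = 0 := by
    intro z x hz
    rw [← lie_skew, hz, neg_zero]
  have hTz0 : ∀ z, IsCentral z → T z = 0 := by
    intro z hz
    have hz' := (hzc z).1 hz
    have hle : Submodule.span ℝ {u : V | ∃ a b : V, u = ⁅a, b⁆} ≤ LinearMap.ker T := by
      rw [Submodule.span_le]
      rintro _ ⟨a, b, rfl⟩
      obtain ⟨v, c, hv, hc, rfl⟩ := dec a
      obtain ⟨w, d, hw, hd, rfl⟩ := dec b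
      show T _ = 0
      rw [add_lie, hc, add_zero, lie_add, cr d v hd, add_zero, h3 v w hv hw]
    exact hle hz'
  have hTv0 : ∀ v, InVperp B v → T v = 0 := by
    intro v hv
    have hc : IsCentral (T v) := by
      intro x
      obtain ⟨w, d, hw, hd, rfl⟩ := dec x
      rw [lie_add, cr d _ hd, add_zero, ← lie_skew, h1 w v hw hv, h3 w v hw hv, neg_zero]
    by_contra hne
    exact absurd (hTv v hv _ hc) (hpos _ hne).ne'
  ext x
  obtain ⟨v, z, hv, hz, rfl⟩ := dec x
  rw [map_add, hTv0 v hv, hTz0 z hz]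
  simp
end

section
/- Let 𝔫 be a 2-step nilpotent finite-dimensional real Lie algebra with inner product ⟨·,·⟩ admitting a bi-invariant orthogonal complex structure, i.e. an endomorphism J with J² = −Id, ⟨Jx,y⟩ = −⟨x,Jy⟩ for all x,y, and J⁅x,y⁆ = ⁅Jx,y⁆ for all x,y ∈ 𝔫. Then there exists a Killing–Yano tensor T on (𝔫,⟨·,·⟩) which is invertible and not parallel with respect to the Levi-Civita product of (𝔫,⟨·,·⟩). -/
/-- Orthogonal projection onto the center. -/
theorem exists_proj {V : Type*} [LieRing V] [LieAlgebra ℝ V] [FiniteDimensional ℝ V]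
    (B : V →ₗ[ℝ] V →ₗ[ℝ] ℝ)
    (hsymm : ∀ x y : V, B x y = B y x) (hpos : ∀ x : V, x ≠ 0 → 0 < B x x) :
    ∃ P : V →ₗ[ℝ] V, (∀ x, IsCentral (P x)) ∧ (∀ x, InVperp B (x - P x)) := by
  let Z : Submodule ℝ V :=
    { carrier := {x | IsCentral x}
      add_mem' := by
        intro a b ha hb y
        rw [add_lie, ha y, hb y, add_zero]
      zero_mem' := fun y => zero_lie y
      smul_mem' := by
        intro c a ha y
        rw [smul_lie, ha y, smul_zero] }
  have hrefl : LinearMap.IsRefl B := fun x y h => by rw [hsymm]; exact h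
  have hdis : Disjoint Z (LinearMap.BilinForm.orthogonal B Z) := by
    rw [Submodule.disjoint_def]
    intro x hx hx'
    by_contra hne
    exact (hpos x hne).ne' (hx' x hx)
  have hc : IsCompl Z (LinearMap.BilinForm.orthogonal B Z) :=
    (LinearMap.BilinForm.isCompl_orthogonal_iff_disjoint hrefl).2 hdis
  refine ⟨Z.subtype ∘ₗ Z.projectionOnto _ hc, fun x => (Z.projectionOnto _ hc x).2, ?_⟩
  intro x z hz
  have h : x - (Z.projectionOnto _ hc x : V) ∈ LinearMap.BilinForm.orthogonal B Z := by
    refine (Submodule.ker_projectionOnto hc).le ?_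
    rw [LinearMap.mem_ker, map_sub, Submodule.projectionOnto_apply_left, sub_self]
  rw [hsymm]
  exact h z hz

/-- a 2-step nilpotent metric Lie algebra carrying a bi-invariant
orthogonal complex structure admits an invertible non-parallel KY tensor. -/
theorem statement_7 (V : Type*) [LieRing V] [LieAlgebra ℝ V] [FiniteDimensional ℝ V]
    (B : V →ₗ[ℝ] V →ₗ[ℝ] ℝ)
    (hsymm : ∀ x y : V, B x y = B y x) (hpos : ∀ x : V, x ≠ 0 → 0 < B x x)
    (h2 : TwoStepNilpotent V)
    (J : V →ₗ[ℝ] V) (hJ2 : ∀ x : V, J (J x) = -x)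
    (hJskew : ∀ x y : V, B (J x) y = - B x (J y))
    (hJbi : ∀ x y : V, J ⁅x, y⁆ = ⁅J x, y⁆)
    (nab : V → V → V) (hLC : IsLeviCivita B nab) :
    ∃ T : V →ₗ[ℝ] V, IsKY B T ∧ Function.Bijective T ∧
      ¬ (∀ x y : V, nab x (T y) = T (nab x y)) := by
  obtain ⟨⟨a, b, hab⟩, hn⟩ := h2
  obtain ⟨P, hPc, hPo⟩ := exists_proj B hsymm hpos
  have hJc : ∀ z, IsCentral z → IsCentral (J z) := fun z hz y => by
    rw [← hJbi, hz y, map_zero]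
  have hsub : ∀ x y : V, IsCentral x → IsCentral y → IsCentral (x - y) := fun x y hx hy w => by
    rw [sub_lie, hx w, hy w, sub_zero]
  -- a central vector orthogonal to the center vanishes
  have hzero : ∀ x, IsCentral x → InVperp B x → x = 0 := fun x hx hv => by
    by_contra hne
    exact (hpos x hne).ne' (hv x hx)
  have huniq : ∀ x z, IsCentral z → InVperp B (x - z) → P x = z := fun x z hz hv => by
    refine sub_eq_zero.1 (hzero _ (hsub _ _ (hPc x) hz) fun w hw => ?_)
    have h1 := hv w hw
    have h2 := hPo x w hw
    simp only [map_sub, LinearMap.sub_apply] at h1 h2 ⊢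
    linarith
  have hPz : ∀ z, IsCentral z → P z = z := fun z hz =>
    huniq z z hz fun w _ => by simp
  have hPv : ∀ x, InVperp B x → P x = 0 := fun x hx =>
    huniq x 0 (fun y => zero_lie y) (by simpa using hx)
  have hPJ : ∀ x, P (J x) = J (P x) := fun x =>
    huniq _ _ (hJc _ (hPc x)) fun w hw => by
      rw [← map_sub, hJskew, hPo x _ (hJc w hw), neg_zero]
  have hPs : ∀ x y, B (P x) y = B x (P y) := fun x y => by
    have h1 := hPo x _ (hPc y)
    have h2 := hPo y _ (hPc x)
    simp only [map_sub, LinearMap.sub_apply] at h1 h2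
    linarith [hsymm (P x) y, hsymm (P x) (P y)]
  have hlie : ∀ x y z : V, ⁅x, ⁅y, z⁆⁆ = 0 := fun x y z => by
    rw [← lie_skew, hn, neg_zero]
  have hTv : ∀ x, InVperp B x → (J + (2 : ℝ) • (J ∘ₗ P)) x = J x := fun x hx => by
    simp [hPv x hx]
  have hTz : ∀ x, IsCentral x → (J + (2 : ℝ) • (J ∘ₗ P)) x = (3 : ℝ) • J x := fun x hx => by
    simp only [LinearMap.add_apply, LinearMap.smul_apply, LinearMap.comp_apply, hPz x hx]
    module
  have hJinj : ∀ x, J x = 0 → x = 0 := fun x hx => by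
    have := hJ2 x
    rw [hx, map_zero] at this
    exact neg_eq_zero.1 this.symm
  refine ⟨J + (2 : ℝ) • (J ∘ₗ P), ⟨?_, ?_, ?_⟩, ?_, ?_⟩
  · intro x y
    simp only [LinearMap.add_apply, LinearMap.smul_apply, LinearMap.comp_apply, map_add,
      map_smul, smul_eq_mul]
    rw [hJskew, hJskew, hPs, hPJ]
    ring
  · intro z hz y
    rw [hTz z hz, smul_lie, hJc z hz y, smul_zero]
  · intro x y hx hy
    rw [hTv x hx, hTz _ (fun w => hn x y w), hJbi]
  · have hinj : Function.Injective (J + (2 : ℝ) • (J ∘ₗ P)) := by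
      rw [injective_iff_map_eq_zero]
      intro x hx
      have h1 : x + (2 : ℝ) • P x = 0 := hJinj _ (by
        simpa only [map_add, map_smul, LinearMap.add_apply, LinearMap.smul_apply,
          LinearMap.comp_apply] using hx)
      have hxc : IsCentral x := fun w => by
        rw [eq_neg_of_add_eq_zero_left h1, neg_lie, smul_lie, hPc x w, smul_zero, neg_zero]
      rw [hTz x hxc] at hx
      exact hJinj x ((smul_eq_zero.1 hx).resolve_left (by norm_num))
    exact ⟨hinj, LinearMap.injective_iff_surjective.1 hinj⟩
  · intro hpar
    have hnab : ∀ x y, InVperp B x → InVperp B y → (2 : ℝ) • nab x y = ⁅x, y⁆ := by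
      intro x y hx hy
      refine sub_eq_zero.1 ?_
      by_contra hne
      suffices hw : ∀ w, B ((2 : ℝ) • nab x y - ⁅x, y⁆) w = 0 from (hpos _ hne).ne' (hw _)
      intro w
      have h := hLC x y w
      rw [hsymm ⁅y, w⁆ x, hsymm ⁅w, x⁆ y, hx _ (fun u => hn y w u),
        hy _ (fun u => hn w x u)] at h
      simp only [map_sub, map_smul, LinearMap.sub_apply, LinearMap.smul_apply, smul_eq_mul]
      linarith
    have hJv : ∀ x, InVperp B x → InVperp B (J x) := fun x hx w hw => by
      rw [hJskew, hx _ (hJc w hw), neg_zero]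
    have hx := hPo a
    have hy := hPo b
    have hbr : ⁅a - P a, b - P b⁆ = ⁅a, b⁆ := by
      rw [sub_lie, hPc a, sub_zero, lie_sub, ← lie_skew a (P b), hPc b]
      simp
    have h := hpar (a - P a) (b - P b)
    rw [hTv _ hy] at h
    have h3 : (2 : ℝ) • _ = (2 : ℝ) • _ := congrArg (fun u => (2 : ℝ) • u) h
    rw [hnab _ _ hx (hJv _ hy), ← map_smul, hnab _ _ hx hy, hbr, hTz _ (fun w => hn a b w),
      ← lie_skew, ← hJbi, ← map_neg, lie_skew, hbr] at h3
    have h4 : (2 : ℝ) • J ⁅a, b⁆ = 0 := by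
      have : (2 : ℝ) • J ⁅a, b⁆ = (3 : ℝ) • J ⁅a, b⁆ - J ⁅a, b⁆ := by module
      rw [this, ← h3, sub_self]
    exact hab (hJinj _ ((smul_eq_zero.1 h4).resolve_left (by norm_num)))
end

section
/- Let 𝔤 be a finite-dimensional real Lie algebra with an inner product ⟨·,·⟩ such that ⁅𝔤,𝔤⁆ ∩ 𝔷(𝔤) ≠ {0}, where 𝔷(𝔤) is the center of 𝔤. Then there is no endomorphism T of 𝔤 which is simultaneously skew-symmetric (⟨Tx,y⟩ = −⟨x,Ty⟩ for all x,y), invertible, and parallel with respect to the Levi-Civita product of (𝔤,⟨·,·⟩). In particular, this holds for any inner product on a non-abelian nilpotent Lie algebra. -/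
/-- A symmetric endomorphism whose square has trace zero vanishes. -/
theorem symm_eq_zero_of_trace_sq {V : Type*} [AddCommGroup V] [Module ℝ V] [FiniteDimensional ℝ V]
    (B : V →ₗ[ℝ] V →ₗ[ℝ] ℝ)
    (hsymm : ∀ x y : V, B x y = B y x) (hpos : ∀ x : V, x ≠ 0 → 0 < B x x)
    (S : V →ₗ[ℝ] V) (hS : ∀ x y, B (S x) y = B x (S y))
    (htr : LinearMap.trace ℝ V (S ∘ₗ S) = 0) : S = 0 := by
  have hnn : ∀ x, 0 ≤ B x x := fun x => by
    by_cases h : x = 0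
    · simp [h]
    · exact (hpos x h).le
  let c : InnerProductSpace.Core ℝ V :=
    { inner := fun x y => B x y
      conj_inner_symm := fun x y => by simp [hsymm x y]
      re_inner_nonneg := fun x => by simpa using hnn x
      add_left := fun x y z => by simp
      smul_left := fun x y r => by simp
      definite := fun x hx => by
        by_contra h
        exact absurd hx (hpos x h).ne' }
  let _ : NormedAddCommGroup V := c.toNormedAddCommGroup
  let _ : InnerProductSpace ℝ V := InnerProductSpace.ofCore c.toCore
  let b := stdOrthonormalBasis ℝ V
  have hin : ∀ x y : V, inner ℝ x y = B x y := fun _ _ => rfl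
  rw [LinearMap.trace_eq_sum_inner _ b] at htr
  have h1 : ∑ i, B (S (b i)) (S (b i)) = 0 := by
    rw [← htr]
    refine Finset.sum_congr rfl fun i _ => ?_
    rw [hin, hS]; rfl
  rw [Finset.sum_eq_zero_iff_of_nonneg (fun i _ => hnn _)] at h1
  refine b.toBasis.ext fun i => ?_
  by_contra h
  have := h1 i (Finset.mem_univ _)
  simp only [OrthonormalBasis.coe_toBasis, LinearMap.zero_apply] at h
  exact absurd (hpos _ h) (by rw [this]; exact lt_irrefl 0)

/-- if ⁅𝔤,𝔤⁆ ∩ 𝔷(𝔤) ≠ 0 then 𝔤 carries no skew-symmetric invertible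
parallel tensor. -/
theorem statement_8 (V : Type*) [LieRing V] [LieAlgebra ℝ V] [FiniteDimensional ℝ V]
    (B : V →ₗ[ℝ] V →ₗ[ℝ] ℝ)
    (hsymm : ∀ x y : V, B x y = B y x) (hpos : ∀ x : V, x ≠ 0 → 0 < B x x)
    (hcap : ∃ x : V, x ≠ 0 ∧ IsCentral x ∧
      x ∈ Submodule.span ℝ {u : V | ∃ a b : V, u = ⁅a, b⁆})
    (nab : V → V → V) (hLC : IsLeviCivita B nab) :
    ¬ ∃ T : V →ₗ[ℝ] V, (∀ x y : V, B (T x) y = - B x (T y)) ∧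
        Function.Bijective T ∧ ∀ x y : V, nab x (T y) = T (nab x y) := by
  rintro ⟨T, hT, hbij, hpar⟩
  obtain ⟨z, hz0, hzc, hzs⟩ := hcap
  have hext : ∀ u v : V, (∀ y, B u y = B v y) → u = v := fun u v h => by
    by_contra hne
    have h1 := hpos (u - v) (sub_ne_zero.2 hne)
    have h2 : B (u - v) (u - v) = 0 := by
      rw [LinearMap.map_sub B, LinearMap.sub_apply, h, sub_self]
    linarith
  have hadd : ∀ u x y, nab u (x + y) = nab u x + nab u y := fun u x y => by
    apply hext
    intro t
    have h1 := hLC u x t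
    have h2 := hLC u y t
    have h3 := hLC u (x + y) t
    simp only [lie_add, add_lie, map_add, LinearMap.add_apply] at *
    linarith
  have hsmul : ∀ u (r : ℝ) x, nab u (r • x) = r • nab u x := fun u r x => by
    apply hext
    intro t
    have h1 := hLC u x t
    have h3 := hLC u (r • x) t
    simp only [lie_smul, smul_lie, map_smul, LinearMap.smul_apply, smul_eq_mul] at *
    linear_combination (1 / 2) * h3 - (r / 2) * h1
  let L : V → (V →ₗ[ℝ] V) := fun u =>
    { toFun := nab u, map_add' := hadd u, map_smul' := fun r x => hsmul u r x }
  have hL : ∀ u x, L u x = nab u x := fun _ _ => rfl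
  have hneg : ∀ x y t, B ⁅x, y⁆ t = - B ⁅y, x⁆ t := fun x y t => by
    rw [← lie_skew x y, map_neg, LinearMap.neg_apply]
  have hskew : ∀ u x y, B (L u x) y = - B x (L u y) := fun u x y => by
    have h1 := hLC u x y
    have h2 := hLC u y x
    have h3 := hneg u x y
    have h4 := hneg u y x
    have h5 := hneg x y u
    rw [hsymm x, hL, hL]
    linarith
  have htor : ∀ x y, nab x y - nab y x = ⁅x, y⁆ := fun x y => by
    apply hext
    intro t
    have h1 := hLC x y t
    have h2 := hLC y x t
    have h3 := hneg x y t
    have h4 := hneg x t y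
    have h5 := hneg y t x
    rw [map_sub, LinearMap.sub_apply]
    linarith
  have hK : ∀ x y, 2 * B (L z x) y = - B ⁅x, y⁆ z := fun x y => by
    have h1 := hLC z x y
    have h2 := hneg y z x
    rw [hzc] at h1 h2
    simp only [map_zero, LinearMap.zero_apply] at h1 h2
    rw [hL]
    linarith
  have hLT : ∀ u x, L u (T x) = T (L u x) := fun u x => hpar u x
  have hKz : L z z = 0 := by
    apply hext
    intro y
    have := hK z y
    rw [hzc] at this
    simp at this
    simp [this]
  have hzx : ∀ x, nab x z = L z x := fun x => by
    have := htor z x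
    rw [hzc, sub_eq_zero] at this
    rw [hL, this]
  have hD : ∀ x, ⁅T z, x⁆ = L (T z) x - T (L z x) := fun x => by
    rw [← htor, hpar, hzx, hL (T z)]
  have hDz : ∀ x, B ⁅T z, x⁆ z = 0 := fun x => by
    have := hK (T z) x
    rw [hLT, hKz] at this
    simp at this
    exact this
  -- the Jacobi identity, paired with the central element
  have hJ : ∀ x, L z (L (T z) x) - L (T z) (L z x) = (2 : ℝ) • L z (T (L z x)) := fun x => by
    apply hext
    intro y
    have h1 := hDz ⁅x, y⁆
    rw [leibniz_lie, map_add, LinearMap.add_apply] at h1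
    have h2 := hK ⁅T z, x⁆ y
    have h3 := hK x ⁅T z, y⁆
    rw [hD] at h2 h3
    simp only [map_sub, LinearMap.sub_apply] at h2 h3
    have h4 := hskew (T z) (L z x) y
    have h5 := hT (L z x) (L z y)
    have h6 := hskew z (T (L z x)) y
    have h7 : B ⁅⁅T z, x⁆, y⁆ z = B ⁅L (T z) x - T (L z x), y⁆ z := by rw [hD]
    have h8 : B ⁅x, ⁅T z, y⁆⁆ z = B ⁅x, L (T z) y - T (L z y)⁆ z := by rw [hD]
    simp only [map_sub, LinearMap.sub_apply, map_smul, LinearMap.smul_apply, smul_eq_mul] at *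
    linarith
  have hTK : T ∘ₗ L z = 0 := by
    refine symm_eq_zero_of_trace_sq B hsymm hpos _ (fun x y => ?_) ?_
    · simp only [LinearMap.comp_apply]
      rw [hT, hskew, hLT, neg_neg]
    · have e : (2 : ℝ) • ((T ∘ₗ L z) ∘ₗ (T ∘ₗ L z))
          = (T ∘ₗ L z) * L (T z) - L (T z) * (T ∘ₗ L z) := by
        ext x
        simp only [LinearMap.smul_apply, LinearMap.comp_apply, LinearMap.sub_apply,
          Module.End.mul_apply]
        rw [← map_smul, ← hJ, map_sub, hLT (T z)]
      have h := congrArg (LinearMap.trace ℝ V) e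
      rw [map_sub, LinearMap.trace_mul_comm, sub_self, map_smul, smul_eq_mul] at h
      linarith
  have hK0 : ∀ x, L z x = 0 := fun x => by
    apply hbij.1
    rw [map_zero]
    exact LinearMap.congr_fun hTK x
  have hspan : ∀ v ∈ Submodule.span ℝ {u : V | ∃ a b : V, u = ⁅a, b⁆}, B v z = 0 := by
    intro v hv
    have hle : Submodule.span ℝ {u : V | ∃ a b : V, u = ⁅a, b⁆} ≤ LinearMap.ker (B.flip z) := by
      rw [Submodule.span_le]
      rintro _ ⟨a, b, rfl⟩
      have := hK a b
      rw [hK0] at this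
      simpa using this
    simpa using hle hv
  exact absurd (hspan z hzs) (hpos z hz0).ne'
end

section
/- Let 𝔫 be a 2-step nilpotent finite-dimensional real Lie algebra with inner product ⟨·,·⟩ admitting an invertible Killing–Yano tensor T. Then 𝔫 admits a bi-invariant orthogonal complex structure: there exists an endomorphism J of 𝔫 with J² = −Id, ⟨Jx,y⟩ = −⟨x,Jy⟩ (equivalently ⟨Jx,Jy⟩ = ⟨x,y⟩) for all x,y, and J⁅x,y⁆ = ⁅Jx,y⁆ for all x,y ∈ 𝔫. -/
open Polynomial in
theorem aux_poly {E : Type*} [NormedAddCommGroup E] [InnerProductSpace ℝ E] [FiniteDimensional ℝ E]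
    (A : E →ₗ[ℝ] E) (hs : ∀ x y : E, inner ℝ (A x) y = inner ℝ x (A y))
    (hp : ∀ x : E, x ≠ 0 → 0 < inner ℝ (A x) x) :
    ∃ p : ℝ[X], ∀ x, aeval A p (aeval A p (A x)) = x := by
  have hA : A.IsSymmetric := hs
  let b := hA.eigenvectorBasis rfl
  let l := hA.eigenvalues rfl
  have hb : ∀ i, A (b i) = l i • b i := fun i => hA.apply_eigenvectorBasis rfl i
  have hl : ∀ i, 0 < l i := fun i => by
    have h := hp (b i) (b.orthonormal.ne_zero i)
    rw [hb, inner_smul_left, real_inner_self_eq_norm_sq, b.orthonormal.1 i] at h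
    simpa using h
  let p : ℝ[X] := Lagrange.interpolate (Finset.univ.image l) id (fun t => (Real.sqrt t)⁻¹)
  have hpe : ∀ i, p.eval (l i) = (Real.sqrt (l i))⁻¹ := fun i =>
    Lagrange.eval_interpolate_at_node (v := id) (fun t => (Real.sqrt t)⁻¹)
      (Function.injective_id.injOn) (Finset.mem_image_of_mem l (Finset.mem_univ i))
  have hpb : ∀ i, aeval A p (b i) = (Real.sqrt (l i))⁻¹ • b i := fun i => by
    rw [← hpe]
    exact Module.End.aeval_apply_of_hasEigenvector
      ⟨Module.End.mem_eigenspace_iff.2 (hb i), b.orthonormal.ne_zero i⟩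
  refine ⟨p, fun x => ?_⟩
  have : (aeval A p) ∘ₗ (aeval A p) ∘ₗ A = LinearMap.id := by
    refine b.toBasis.ext fun i => ?_
    have hq : Real.sqrt (l i) ≠ 0 := (Real.sqrt_pos.2 (hl i)).ne'
    simp only [OrthonormalBasis.coe_toBasis, LinearMap.comp_apply, hb, map_smul, hpb, smul_smul,
      LinearMap.id_apply]
    have : l i * ((Real.sqrt (l i))⁻¹ * (Real.sqrt (l i))⁻¹) = 1 := by
      field_simp
      exact (Real.sq_sqrt (hl i).le).symm
    rw [← mul_assoc] at this
    rw [this, one_smul]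
  exact LinearMap.congr_fun this x

theorem aux_proj {E : Type*} [NormedAddCommGroup E] [InnerProductSpace ℝ E] [FiniteDimensional ℝ E]
    (K : Submodule ℝ E) : ∃ P : E →ₗ[ℝ] E, ∀ x, P x ∈ K ∧ ∀ z ∈ K, inner ℝ (x - P x) z = 0 :=
  ⟨K.starProjection, fun x => ⟨by simp, fun z hz => by
    simpa using K.starProjection_inner_eq_zero x z hz⟩⟩

/-- The inner product core attached to `B`. -/
@[reducible] def auxCore {V : Type*} [AddCommGroup V] [Module ℝ V] (B : V →ₗ[ℝ] V →ₗ[ℝ] ℝ)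
    (hsymm : ∀ x y : V, B x y = B y x) (hpos : ∀ x : V, x ≠ 0 → 0 < B x x) :
    InnerProductSpace.Core ℝ V where
  inner x y := B x y
  conj_inner_symm x y := by simpa using hsymm y x
  re_inner_nonneg x := by
    by_cases h : x = 0
    · simp [h]
    · simpa using (hpos x h).le
  add_left x y z := by simp
  smul_left x y r := by simp
  definite x h := by
    by_contra h'
    exact (hpos x h').ne' h

open Polynomial in
theorem aux_all {V : Type*} [AddCommGroup V] [Module ℝ V] [FiniteDimensional ℝ V]
    (B : V →ₗ[ℝ] V →ₗ[ℝ] ℝ)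
    (hsymm : ∀ x y : V, B x y = B y x) (hpos : ∀ x : V, x ≠ 0 → 0 < B x x) :
    (∀ A : V →ₗ[ℝ] V, (∀ x y : V, B (A x) y = B x (A y)) → (∀ x : V, x ≠ 0 → 0 < B (A x) x) →
      ∃ p : ℝ[X], ∀ x, aeval A p (aeval A p (A x)) = x) ∧
    (∀ K : Submodule ℝ V, ∃ P : V →ₗ[ℝ] V, ∀ x, P x ∈ K ∧ ∀ z ∈ K, B (x - P x) z = 0) := by
  let c := auxCore B hsymm hpos
  let n : NormedAddCommGroup V := c.toNormedAddCommGroup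
  let i : InnerProductSpace ℝ V := InnerProductSpace.ofCore c.toCore
  exact ⟨fun A hs hp => aux_poly A hs hp, fun K => aux_proj K⟩

open Polynomial in
theorem aux_J {V : Type*} [LieRing V] [LieAlgebra ℝ V] [FiniteDimensional ℝ V]
    (B : V →ₗ[ℝ] V →ₗ[ℝ] ℝ)
    (hsymm : ∀ x y : V, B x y = B y x) (hpos : ∀ x : V, x ≠ 0 → 0 < B x x)
    (S : V →ₗ[ℝ] V) (hskew : ∀ x y : V, B (S x) y = - B x (S y)) (hinj : ∀ x, S x = 0 → x = 0)
    (hbr : ∀ x y : V, S ⁅x, y⁆ = ⁅S x, y⁆) :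
    ∃ J : V →ₗ[ℝ] V, (∀ x : V, J (J x) = -x) ∧
      (∀ x y : V, B (J x) y = - B x (J y)) ∧
      (∀ x y : V, B (J x) (J y) = B x y) ∧
      (∀ x y : V, J ⁅x, y⁆ = ⁅J x, y⁆) := by
  let A : V →ₗ[ℝ] V := -(S ∘ₗ S)
  have hAx : ∀ x, A x = - S (S x) := fun x => rfl
  have hAs : ∀ x y : V, B (A x) y = B x (A y) := fun x y => by
    simp [hAx, hskew]
  obtain ⟨p, hp⟩ := (aux_all B hsymm hpos).1 A hAs (fun x hx => by
    have := hpos (S x) (fun h => hx (hinj x h))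
    simpa [hAx, hskew] using this)
  have key : ∀ q : ℝ[X], (∀ x, aeval A q (S x) = S (aeval A q x)) ∧
      (∀ x y, B (aeval A q x) y = B x (aeval A q y)) ∧
      (∀ x y : V, aeval A q ⁅x, y⁆ = ⁅aeval A q x, y⁆) := by
    intro q
    induction q using Polynomial.induction_on' with
    | add f g hf hg =>
      refine ⟨fun x => ?_, fun x y => ?_, fun x y => ?_⟩
      · simp [hf.1, hg.1]
      · simp [hf.2.1, hg.2.1]
      · simp [hf.2.2, hg.2.2]
    | monomial n a =>
      rw [aeval_monomial]
      have : ∀ n : ℕ, (∀ x, (A ^ n) (S x) = S ((A ^ n) x)) ∧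
        (∀ x y, B ((A ^ n) x) y = B x ((A ^ n) y)) ∧
        (∀ x y : V, (A ^ n) ⁅x, y⁆ = ⁅(A ^ n) x, y⁆) := by
        intro n
        induction n with
        | zero => simp
        | succ n ih =>
          refine ⟨fun x => ?_, fun x y => ?_, fun x y => ?_⟩
          · simp [pow_succ, hAx, ih.1]
          · rw [pow_succ, Module.End.mul_apply, ih.2.1, hAs, ← Module.End.mul_apply, ← pow_succ', pow_succ]
          · rw [pow_succ, Module.End.mul_apply, Module.End.mul_apply, hAx, hbr, hbr, ← neg_lie, ih.2.2, hAx]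
      obtain ⟨h1, h2, h3⟩ := this n
      refine ⟨fun x => ?_, fun x y => ?_, fun x y => ?_⟩
      · simp [h1, Module.algebraMap_end_apply]
      · simp [h2, Module.algebraMap_end_apply]
      · simp [h3, Module.algebraMap_end_apply]
  obtain ⟨k1, k2, k3⟩ := key p
  have hJJ : ∀ x, aeval A p (S (aeval A p (S x))) = -x := fun x => by
    have := hp x
    rw [hAx, map_neg, map_neg, k1 (S x)] at this
    exact neg_eq_iff_eq_neg.1 this
  have hsk : ∀ x y : V, B (aeval A p (S x)) y = - B x (aeval A p (S y)) := fun x y => by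
    rw [k2, hskew, k1]
  refine ⟨aeval A p ∘ₗ S, hJJ, hsk, fun x y => ?_, fun x y => ?_⟩
  · simp only [LinearMap.comp_apply]
    rw [hsk, hJJ]; simp
  · simp [hbr, k3]

/-- a 2-step nilpotent metric Lie algebra with an invertible KY tensor
admits a bi-invariant orthogonal complex structure. -/
theorem statement_9 (V : Type*) [LieRing V] [LieAlgebra ℝ V] [FiniteDimensional ℝ V]
    (B : V →ₗ[ℝ] V →ₗ[ℝ] ℝ)
    (hsymm : ∀ x y : V, B x y = B y x) (hpos : ∀ x : V, x ≠ 0 → 0 < B x x)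
    (h2 : TwoStepNilpotent V)
    (T : V →ₗ[ℝ] V) (hT : IsKY B T) (hbij : Function.Bijective T) :
    ∃ J : V →ₗ[ℝ] V, (∀ x : V, J (J x) = -x) ∧
      (∀ x y : V, B (J x) y = - B x (J y)) ∧
      (∀ x y : V, B (J x) (J y) = B x y) ∧
      (∀ x y : V, J ⁅x, y⁆ = ⁅J x, y⁆) := by
  obtain ⟨hsk, hz, hky⟩ := hT
  let K : Submodule ℝ V :=
    { carrier := {x | IsCentral x}
      add_mem' := fun {a b} ha hb y => by rw [add_lie, ha y, hb y, add_zero]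
      zero_mem' := fun y => zero_lie y
      smul_mem' := fun c x hx y => by rw [smul_lie, hx y, smul_zero] }
  have hK : ∀ x, x ∈ K ↔ IsCentral x := fun x => Iff.rfl
  obtain ⟨P, hP⟩ := (aux_all B hsymm hpos).2 K
  have hzero : ∀ x : V, B x x = 0 → x = 0 := fun x h => by
    by_contra h'
    exact (hpos x h').ne' h
  have huniq : ∀ x w, w ∈ K → (∀ z ∈ K, B (x - w) z = 0) → P x = w := fun x w hw h => by
    have hm : P x - w ∈ K := K.sub_mem (hP x).1 hw
    refine sub_eq_zero.1 (hzero _ ?_)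
    have h1 := h _ hm
    have h3 := (hP x).2 _ hm
    have h4 : B (P x - w) (P x - w) = B (x - w) (P x - w) - B (x - P x) (P x - w) := by
      rw [← LinearMap.sub_apply, ← map_sub]; congr 2; abel
    rw [h4, h1, h3, sub_zero]
  have hPT : ∀ x, P (T x) = T (P x) := fun x => by
    refine huniq _ _ (hz _ (hP x).1) fun z hzK => ?_
    rw [← map_sub, hsk, (hP x).2 _ (hz z hzK), neg_zero]
  have hPs : ∀ x y, B (P x) y = B x (P y) := fun x y => by
    have h1 := (hP x).2 _ (hP y).1
    have h3 := (hP y).2 _ (hP x).1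
    rw [map_sub, LinearMap.sub_apply] at h1 h3
    rw [hsymm (P x) y, sub_eq_zero.1 h1, sub_eq_zero.1 h3, hsymm]
  have hPid : ∀ x, x ∈ K → P x = x := fun x hx => huniq x x hx (by simp)
  have hcr : ∀ x z : V, IsCentral z → ⁅x, z⁆ = 0 := fun x z h => by
    rw [← lie_skew, h x, neg_zero]
  refine aux_J B hsymm hpos ((3 : ℝ) • T - (2 : ℝ) • (T ∘ₗ P)) ?_ ?_ ?_
  · intro x y
    simp [hsk, hPs, hPT]
    ring
  · intro x hx
    have h1 : T ((3 : ℝ) • x - (2 : ℝ) • P x) = 0 := by simpa using hx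
    have h3 : (3 : ℝ) • x - (2 : ℝ) • P x = 0 := hbij.1 (by rw [h1, map_zero])
    have h4 : x = (3 : ℝ)⁻¹ • (2 : ℝ) • P x := by
      rw [← sub_eq_zero.1 h3, smul_smul]; norm_num
    have hx : x ∈ K := by
      rw [h4]
      exact K.smul_mem _ (K.smul_mem _ (hP x).1)
    rw [hPid x hx, ← sub_smul] at h3
    norm_num at h3
    exact h3
  · intro x y
    have hc : P ⁅x, y⁆ = ⁅x, y⁆ := hPid _ (h2.2 x y)
    have e1 : ⁅x, y⁆ = ⁅x - P x, y - P y⁆ := by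
      rw [lie_sub, hcr _ _ (hP y).1, sub_zero, sub_lie, (hP x).1 y, sub_zero]
    have e2 : T ⁅x, y⁆ = (3 : ℝ) • ⁅T x, y⁆ := by
      rw [e1, hky _ _ (hP x).2 (hP y).2, map_sub, sub_lie, hz _ (hP x).1, sub_zero, lie_sub,
        hcr _ _ (hP y).1, sub_zero]
    have e3 : ⁅T (P x), y⁆ = 0 := hz _ (hP x).1 y
    simp only [LinearMap.sub_apply, LinearMap.smul_apply, LinearMap.comp_apply, hc, sub_lie,
      smul_lie, e3, smul_zero, sub_zero, ← e2]
    rw [← sub_smul]; norm_num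
end

section
/- Let 𝔫 be a 2-step nilpotent finite-dimensional real Lie algebra with inner product ⟨·,·⟩ and let T be an invertible Killing–Yano tensor on (𝔫,⟨·,·⟩). Let x, y, u, v ∈ 𝔳 = 𝔷^⊥ satisfy Tx = a·y, Ty = −a·x, Tu = b·v, Tv = −b·u with a > 0, b > 0, and suppose that at least one of the brackets ⁅x,u⁆, ⁅x,v⁆, ⁅y,u⁆, ⁅y,v⁆ is non-zero. Then a = b, all four of these brackets are non-zero, ⁅x,u⁆ = −⁅y,v⁆, and ⁅x,v⁆ = ⁅y,u⁆. -/
/-- for an invertible KY tensor and x,y,u,v ∈ 𝔳 with Tx = a·y, Ty = -a·x,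
Tu = b·v, Tv = -b·u (a, b > 0), if one of the four cross brackets is non-zero then
a = b, all four brackets are non-zero, ⁅x,u⁆ = -⁅y,v⁆ and ⁅x,v⁆ = ⁅y,u⁆. -/
theorem statement_11 (V : Type*) [LieRing V] [LieAlgebra ℝ V] [FiniteDimensional ℝ V]
    (B : V →ₗ[ℝ] V →ₗ[ℝ] ℝ)
    (hsymm : ∀ x y : V, B x y = B y x) (hpos : ∀ x : V, x ≠ 0 → 0 < B x x)
    (h2 : TwoStepNilpotent V)
    (T : V →ₗ[ℝ] V) (hT : IsKY B T) (hbij : Function.Bijective T)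
    (x y u v : V) (hx : InVperp B x) (hy : InVperp B y)
    (hu : InVperp B u) (hv : InVperp B v)
    (a b : ℝ) (ha : 0 < a) (hb : 0 < b)
    (hTx : T x = a • y) (hTy : T y = -(a • x))
    (hTu : T u = b • v) (hTv : T v = -(b • u))
    (hne : ⁅x, u⁆ ≠ 0 ∨ ⁅x, v⁆ ≠ 0 ∨ ⁅y, u⁆ ≠ 0 ∨ ⁅y, v⁆ ≠ 0) :
    a = b ∧ ⁅x, u⁆ ≠ 0 ∧ ⁅x, v⁆ ≠ 0 ∧ ⁅y, u⁆ ≠ 0 ∧ ⁅y, v⁆ ≠ 0 ∧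
      ⁅x, u⁆ = -⁅y, v⁆ ∧ ⁅x, v⁆ = ⁅y, u⁆ := by
  obtain ⟨-, -, hK⟩ := hT
  have hK' : ∀ p q : V, InVperp B p → InVperp B q → T ⁅p, q⁆ = (3 : ℝ) • ⁅p, T q⁆ := by
    intro p q hp hq
    rw [← lie_skew, map_neg, hK q p hq hp, ← smul_neg, lie_skew]
  have inj0 : ∀ w : V, T w = 0 → w = 0 := fun w hw => hbij.1 (by rw [hw, map_zero])
  have h3 : (3 : ℝ) ≠ 0 := by norm_num
  have xu1 := hK x u hx hu
  have xu2 := hK' x u hx hu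
  have yu1 := hK y u hy hu
  have yu2 := hK' y u hy hu
  have xv1 := hK x v hx hv
  have xv2 := hK' x v hx hv
  have yv1 := hK y v hy hv
  have yv2 := hK' y v hy hv
  simp only [hTx, hTy, hTu, hTv, smul_lie, lie_smul, neg_lie, lie_neg] at xu1 xu2 yu1 yu2 xv1 xv2 yv1 yv2
  have e1 : a • ⁅y, u⁆ = b • ⁅x, v⁆ := smul_right_injective V h3 (xu1.symm.trans xu2)
  have e2 : -(a • ⁅x, u⁆) = b • ⁅y, v⁆ := smul_right_injective V h3 (yu1.symm.trans yu2)
  have e3 : a • ⁅y, v⁆ = -(b • ⁅x, u⁆) := smul_right_injective V h3 (xv1.symm.trans xv2)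
  generalize ⁅x, u⁆ = p at *
  generalize ⁅y, u⁆ = r at *
  generalize ⁅x, v⁆ = q at *
  generalize ⁅y, v⁆ = s at *
  have pr : r = 0 → p = 0 := fun h => inj0 p (by rw [xu1, h]; simp)
  have rp : p = 0 → r = 0 := fun h => inj0 r (by rw [yu1, h]; simp)
  have qr : r = 0 → q = 0 := fun h => by
    rw [h, smul_zero] at e1
    exact (smul_eq_zero.1 e1.symm).resolve_left hb.ne'
  have sp : p = 0 → s = 0 := fun h => by
    rw [h, smul_zero, neg_zero] at e2
    exact (smul_eq_zero.1 e2.symm).resolve_left hb.ne'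
  have hp : p ≠ 0 := by tauto
  have hab : a = b := by
    have h : (a * a - b * b) • p = 0 := by
      have h1 := congrArg (fun w => a • w) e2
      have h2 := congrArg (fun w => b • w) e3
      simp only [smul_neg] at h1 h2
      rw [smul_comm a b s, h2, neg_inj, smul_smul, smul_smul] at h1
      rw [sub_smul, h1, sub_self]
    have h' := (smul_eq_zero.1 h).resolve_right hp
    nlinarith
  subst hab
  have hrq : r = q := smul_right_injective V ha.ne' e1
  have hps : p = -s := by
    apply smul_right_injective V ha.ne'
    simp only [smul_neg]
    rw [← e2, neg_neg]
  have hr : r ≠ 0 := fun h => hp (pr h)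
  refine ⟨rfl, hp, hrq ▸ hr, hr, ?_, hps, hrq.symm⟩
  intro h
  exact hp (by rw [hps, h, neg_zero])
end

section
/- Let 𝔫 be a 2-step nilpotent finite-dimensional real Lie algebra with inner product ⟨·,·⟩ which is irreducible, i.e. 𝔫 cannot be written as an orthogonal direct sum of two non-zero Lie ideals, and let T be an invertible Killing–Yano tensor on (𝔫,⟨·,·⟩). Then the center 𝔷 equals the commutator ideal 𝔫' = ⁅𝔫,𝔫⁆, and there exists a real number a ≠ 0 such that T²v = −a²·v for all v ∈ 𝔳 = 𝔷^⊥ and T²z = −9a²·z for all z ∈ 𝔷. -/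
theorem ky_core {V : Type*} [AddCommGroup V] [Module ℝ V] [FiniteDimensional ℝ V]
    (B : V →ₗ[ℝ] V →ₗ[ℝ] ℝ)
    (hsymm : ∀ x y : V, B x y = B y x) (hpos : ∀ x : V, x ≠ 0 → 0 < B x x) :
    (∀ W : Submodule ℝ V, ∃ P : V →ₗ[ℝ] V, ∀ x, P x ∈ W ∧ ∀ w ∈ W, B (x - P x) w = 0) ∧
    (∀ S : V →ₗ[ℝ] V, (∀ x y, B (S x) y = B x (S y)) → (∃ x : V, x ≠ 0) →
      ∃ (μ : ℝ) (x : V), x ≠ 0 ∧ S x = μ • x) := by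
  let c : InnerProductSpace.Core ℝ V :=
    { inner := fun x y => B x y
      conj_inner_symm := fun x y => by simpa using hsymm y x
      re_inner_nonneg := fun x => by
        by_cases h : x = 0
        · simp [h]
        · simpa using (hpos x h).le
      add_left := fun x y z => by simp
      smul_left := fun x y r => by simp
      definite := fun x hx => by
        by_contra h
        exact (hpos x h).ne' hx }
  let _ : NormedAddCommGroup V := c.toNormedAddCommGroup
  let _ : InnerProductSpace ℝ V := InnerProductSpace.ofCore c.toCore
  constructor
  · intro W
    refine ⟨W.starProjection.toLinearMap, fun x => ⟨?_, fun w hw => ?_⟩⟩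
    · exact Submodule.starProjection_apply_mem W x
    · exact W.starProjection_inner_eq_zero x w hw
  · rintro S hS ⟨x0, hx0⟩
    have : Nontrivial V := ⟨x0, 0, hx0⟩
    have h : S.IsSymmetric := hS
    obtain ⟨x, hx⟩ := h.hasEigenvalue_iSup_of_finiteDimensional.exists_hasEigenvector
    exact ⟨_, x, hx.2, hx.apply_eq_smul⟩

/-- A symmetric endomorphism commuting with all `ad x` is a scalar. -/
theorem ky_scalar {V : Type*} [LieRing V] [LieAlgebra ℝ V] [FiniteDimensional ℝ V]
    (B : V →ₗ[ℝ] V →ₗ[ℝ] ℝ)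
    (hsymm : ∀ x y : V, B x y = B y x) (hpos : ∀ x : V, x ≠ 0 → 0 < B x x)
    (hne : ∃ x : V, x ≠ 0)
    (hirr : ¬ ∃ I₁ I₂ : Submodule ℝ V, I₁ ≠ ⊥ ∧ I₂ ≠ ⊥ ∧
      (∀ x : V, ∀ y ∈ I₁, ⁅x, y⁆ ∈ I₁) ∧ (∀ x : V, ∀ y ∈ I₂, ⁅x, y⁆ ∈ I₂) ∧
      (∀ x ∈ I₁, ∀ y ∈ I₂, B x y = 0) ∧ I₁ ⊓ I₂ = ⊥ ∧ I₁ ⊔ I₂ = ⊤)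
    (S : V →ₗ[ℝ] V) (hS : ∀ x y, B (S x) y = B x (S y))
    (hc : ∀ x y : V, S ⁅x, y⁆ = ⁅x, S y⁆) : ∃ μ : ℝ, ∀ x, S x = μ • x := by
  have hdef : ∀ x, B x x = 0 → x = 0 := fun x hx => by
    by_contra h
    exact (hpos x h).ne' hx
  obtain ⟨hP, hE⟩ := ky_core B hsymm hpos
  obtain ⟨μ, x0, hx0, hx0'⟩ := hE S hS hne
  refine ⟨μ, ?_⟩
  set N : V →ₗ[ℝ] V := S - μ • LinearMap.id with hN
  have hNa : ∀ x, N x = S x - μ • x := fun x => by simp [hN]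
  have hNs : ∀ x y, B (N x) y = B x (N y) := fun x y => by simp [hNa, hS]
  have hNc : ∀ x y : V, N ⁅x, y⁆ = ⁅x, N y⁆ := fun x y => by simp [hNa, hc]
  have horth : ∀ x ∈ LinearMap.ker N, ∀ y ∈ LinearMap.range N, B x y = 0 := by
    rintro x hx _ ⟨y, rfl⟩
    rw [← hNs, LinearMap.mem_ker.1 hx]
    simp
  by_contra hcon
  apply hirr
  refine ⟨LinearMap.ker N, LinearMap.range N, ?_, ?_, ?_, ?_, horth, ?_, ?_⟩
  · intro h
    have : x0 ∈ LinearMap.ker N := by simp [hNa, hx0']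
    rw [h] at this
    exact hx0 (by simpa using this)
  · intro h
    apply hcon
    intro x
    have : N x ∈ LinearMap.range N := ⟨x, rfl⟩
    rw [h, Submodule.mem_bot, hNa] at this
    exact sub_eq_zero.1 this
  · intro x y hy
    rw [LinearMap.mem_ker, hNc, LinearMap.mem_ker.1 hy, lie_zero]
  · rintro x _ ⟨y, rfl⟩
    exact ⟨⁅x, y⁆, hNc x y⟩
  · rw [eq_bot_iff]
    rintro x ⟨h1, h2⟩
    exact hdef x (horth x h1 x h2)
  · rw [eq_top_iff]
    intro x _
    obtain ⟨P, hP⟩ := hP (LinearMap.range N)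
    obtain ⟨h1, h2⟩ := hP x
    rw [← sub_add_cancel x (P x)]
    refine Submodule.add_mem_sup ?_ h1
    rw [LinearMap.mem_ker]
    apply hdef
    rw [hNs, h2 _ ⟨_, rfl⟩]

/-- on an irreducible 2-step nilpotent metric Lie algebra with an
invertible KY tensor T, the center equals the commutator ideal and
T² = -a²·Id on 𝔳, T² = -9a²·Id on 𝔷, for some a ≠ 0. -/
theorem statement_12 (V : Type*) [LieRing V] [LieAlgebra ℝ V] [FiniteDimensional ℝ V]
    (B : V →ₗ[ℝ] V →ₗ[ℝ] ℝ)
    (hsymm : ∀ x y : V, B x y = B y x) (hpos : ∀ x : V, x ≠ 0 → 0 < B x x)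
    (h2 : TwoStepNilpotent V)
    (hirr : ¬ ∃ I₁ I₂ : Submodule ℝ V, I₁ ≠ ⊥ ∧ I₂ ≠ ⊥ ∧
      (∀ x : V, ∀ y ∈ I₁, ⁅x, y⁆ ∈ I₁) ∧ (∀ x : V, ∀ y ∈ I₂, ⁅x, y⁆ ∈ I₂) ∧
      (∀ x ∈ I₁, ∀ y ∈ I₂, B x y = 0) ∧ I₁ ⊓ I₂ = ⊥ ∧ I₁ ⊔ I₂ = ⊤)
    (T : V →ₗ[ℝ] V) (hT : IsKY B T) (hbij : Function.Bijective T) :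
    (∀ x : V, IsCentral x ↔ x ∈ Submodule.span ℝ {u : V | ∃ a b : V, u = ⁅a, b⁆}) ∧
    ∃ a : ℝ, a ≠ 0 ∧ (∀ v : V, InVperp B v → T (T v) = -(a ^ 2) • v) ∧
      (∀ z : V, IsCentral z → T (T z) = -(9 * a ^ 2) • z) := by
  have hdef : ∀ x, B x x = 0 → x = 0 := fun x hx => by
    by_contra h
    exact (hpos x h).ne' hx
  have hP := (ky_core B hsymm hpos).1
  obtain ⟨⟨p, q, hpq⟩, hnil⟩ := h2
  obtain ⟨hskew, hTz, hKY⟩ := hT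
  -- the center as a submodule
  let Z : Submodule ℝ V :=
    { carrier := {x | IsCentral x}
      add_mem' := fun {a b} ha hb y => by rw [add_lie, ha y, hb y, add_zero]
      zero_mem' := fun y => zero_lie y
      smul_mem' := fun r a ha y => by rw [smul_lie, ha y, smul_zero] }
  have hZ : ∀ x, x ∈ Z ↔ IsCentral x := fun x => Iff.rfl
  set C : Submodule ℝ V := Submodule.span ℝ {u : V | ∃ a b : V, u = ⁅a, b⁆} with hC
  have hbr : ∀ a b : V, ⁅a, b⁆ ∈ C := fun a b => Submodule.subset_span ⟨a, b, rfl⟩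
  have hCZ : C ≤ Z := by
    rw [hC, Submodule.span_le]
    rintro _ ⟨a, b, rfl⟩
    exact fun y => hnil a b y
  constructor
  · intro x
    refine ⟨fun hx => ?_, fun hx => hCZ hx⟩
    obtain ⟨P, hPC⟩ := hP C
    by_contra hxC
    have hq0 : x - P x ≠ 0 := fun h => hxC (by rw [sub_eq_zero.1 h]; exact (hPC x).1)
    have hqZ : x - P x ∈ Z := Z.sub_mem hx (hCZ (hPC x).1)
    let I₁ : Submodule ℝ V := Submodule.span ℝ {x - P x}
    have hI₁Z : I₁ ≤ Z := by
      rw [Submodule.span_le]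
      rintro _ rfl
      exact hqZ
    let I₂ : Submodule ℝ V := LinearMap.ker (B (x - P x))
    have horth : ∀ u ∈ I₁, ∀ y ∈ I₂, B u y = 0 := by
      intro u hu y hy
      obtain ⟨r, rfl⟩ := Submodule.mem_span_singleton.1 hu
      simp only [map_smul, LinearMap.smul_apply]
      rw [LinearMap.mem_ker.1 hy, smul_zero]
    have hCI : C ≤ I₂ := fun w hw => (hPC x).2 w hw
    apply hirr
    refine ⟨I₁, I₂, ?_, ?_, ?_, ?_, horth, ?_, ?_⟩
    · simpa [I₁] using hq0
    · intro h
      have := hCI (hbr p q)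
      rw [h] at this
      exact hpq (by simpa using this)
    · intro a y hy
      rw [← lie_skew, hI₁Z hy a]
      simp
    · intro a y _
      exact hCI (hbr a y)
    · rw [eq_bot_iff]
      rintro u ⟨h1, h2⟩
      exact hdef u (horth u h1 u h2)
    · rw [eq_top_iff]
      intro u _
      have hB := hpos _ hq0
      set w := x - P x with hw
      rw [← add_sub_cancel ((B w u / B w w) • w) u]
      refine Submodule.add_mem_sup (Submodule.smul_mem _ _ (Submodule.mem_span_singleton_self _)) ?_
      have key : B w (u - (B w u / B w w) • w) = 0 := by
        rw [map_sub, map_smul, smul_eq_mul, div_mul_cancel₀ _ hB.ne', sub_self]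
      exact key
  · obtain ⟨P, hPZ⟩ := hP Z
    have hPm : ∀ x, IsCentral (P x) := fun x => (hPZ x).1
    have hPo : ∀ x, InVperp B (x - P x) := fun x z hz => (hPZ x).2 z hz
    have hTv : ∀ x, InVperp B x → InVperp B (T x) := fun x hx z hz => by
      rw [hskew, hx _ (hTz z hz), neg_zero]
    have hPz : ∀ z, IsCentral z → P z = z := fun z hz => by
      have h1 : z - P z ∈ Z := Z.sub_mem hz (hPm z)
      exact (sub_eq_zero.1 (hdef _ (hPo z _ h1))).symm
    have hPv : ∀ x, InVperp B x → P x = 0 := fun x hx => by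
      apply hdef
      have h1 := hPo x _ (hPm x)
      rw [map_sub, LinearMap.sub_apply, hx _ (hPm x)] at h1
      linarith
    -- brackets only see the noncentral part
    have hbr' : ∀ x y : V, ⁅x, y⁆ = ⁅x - P x, y - P y⁆ := fun x y => by
      have h1 : ∀ u, ⁅u, P y⁆ = 0 := fun u => by rw [← lie_skew, hPm y, neg_zero]
      rw [sub_lie, lie_sub, lie_sub, h1, h1, hPm x y]
      simp
    have hKY' : ∀ x y : V, InVperp B x → InVperp B y → T ⁅x, y⁆ = (3 : ℝ) • ⁅x, T y⁆ :=
      fun x y hx hy => by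
        rw [← lie_skew, map_neg, hKY y x hy hx, ← lie_skew x (T y), smul_neg]
    let S : V →ₗ[ℝ] V := (T ∘ₗ T) - (8 / 9 : ℝ) • (T ∘ₗ T ∘ₗ P)
    have hSa : ∀ x, S x = T (T x) - (8 / 9 : ℝ) • T (T (P x)) := fun x => by simp [S]
    have hSz : ∀ z, IsCentral z → S z = (1 / 9 : ℝ) • T (T z) := fun z hz => by
      rw [hSa, hPz z hz]; module
    have hSv : ∀ v, InVperp B v → S v = T (T v) := fun v hv => by
      rw [hSa, hPv v hv]; simp
    have hTT : ∀ x y, B (T (T x)) y = B x (T (T y)) := fun x y => by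
      rw [hskew, hskew, neg_neg]
    have hPs : ∀ x y, B (P x) y = B (P x) (P y) := fun x y => by
      have h1 := hPo y _ (hPm x)
      rw [hsymm, map_sub] at h1
      linarith
    have hTTP : ∀ x, P (T (T x)) = T (T (P x)) := fun x => by
      have h1 := hPv _ (hTv _ (hTv _ (hPo x)))
      rw [map_sub, map_sub, map_sub, hPz _ (hTz _ (hTz _ (hPm x)))] at h1
      exact sub_eq_zero.1 h1
    have hSs : ∀ x y, B (S x) y = B x (S y) := fun x y => by
      have h1 : B (T (T (P x))) y = B x (T (T (P y))) := by
        rw [hTT, hPs, hTTP, hsymm x, ← hTTP y, hPs (T (T y)) x, hsymm]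
      rw [hSa, hSa, map_sub, map_sub, map_smul, map_smul, LinearMap.sub_apply,
        LinearMap.smul_apply, h1, hTT]
    have hSc : ∀ x y : V, S ⁅x, y⁆ = ⁅x, S y⁆ := fun x y => by
      have h1 : ⁅x, S y⁆ = ⁅x - P x, T (T (y - P y))⁆ := by
        have h2 : S y - P (S y) = T (T (y - P y)) := by
          rw [hSa]
          simp only [map_sub, map_smul, hTTP]
          rw [hPz _ (hPm y)]
          module
        rw [hbr' x (S y), h2]
      rw [h1, hSz _ (hCZ (hbr x y)), hbr' x y, hKY' _ _ (hPo x) (hPo y), map_smul,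
        hKY' _ _ (hPo x) (hTv _ (hPo y))]
      module
    obtain ⟨μ, hμ⟩ := ky_scalar B hsymm hpos ⟨_, hpq⟩ hirr S hSs hSc
    have hp : p - P p ≠ 0 := fun h => hpq (by rw [hbr' p q, h, zero_lie])
    have hμneg : μ < 0 := by
      have h1 := hμ (p - P p)
      rw [hSv _ (hPo p)] at h1
      have h2 := hskew (T (p - P p)) (p - P p)
      have h3 := hpos _ hp
      have h4 : T (p - P p) ≠ 0 := fun h => hp (hbij.1 (by rw [h, map_zero]))
      have h5 := hpos _ h4
      rw [h1, map_smul, LinearMap.smul_apply, smul_eq_mul] at h2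
      by_contra hcon
      nlinarith
    refine ⟨Real.sqrt (-μ), (Real.sqrt_pos.2 (by linarith)).ne', fun v hv => ?_, fun z hz => ?_⟩
    · rw [Real.sq_sqrt (by linarith), ← hSv v hv, hμ, neg_neg]
    · rw [Real.sq_sqrt (by linarith)]
      have h1 := hμ z
      rw [hSz z hz] at h1
      have h2 : T (T z) = (9 : ℝ) • ((1 / 9 : ℝ) • T (T z)) := by module
      rw [h2, h1]
      module
end

section
/- Let 𝔫 be a 2-step nilpotent finite-dimensional real Lie algebra with inner product ⟨·,·⟩, center 𝔷 and 𝔳 = 𝔷^⊥, and let B be a symmetric endomorphism of 𝔫 (⟨Bx,y⟩ = ⟨x,By⟩ for all x,y). Then B is a Codazzi tensor, i.e. ∇_x(By) − B(∇_x y) = ∇_y(Bx) − B(∇_y x) for all x,y where ∇ is the Levi-Civita product of (𝔫,⟨·,·⟩), if and only if B(𝔷) ⊆ 𝔷 and B⁅x,y⁆ = ⁅Bx,y⁆ for all x,y ∈ 𝔫. Moreover, these conditions imply that B is parallel: ∇_x(By) = B(∇_x y) for all x,y. -/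
/-- on a 2-step nilpotent metric Lie algebra, a symmetric endomorphism
is a Codazzi tensor iff it preserves the center and commutes with all brackets;
moreover these conditions imply it is parallel. -/
theorem statement_13 (V : Type*) [LieRing V] [LieAlgebra ℝ V] [FiniteDimensional ℝ V]
    (g : V →ₗ[ℝ] V →ₗ[ℝ] ℝ)
    (hsymm : ∀ x y : V, g x y = g y x) (hpos : ∀ x : V, x ≠ 0 → 0 < g x x)
    (h2 : TwoStepNilpotent V)
    (nab : V → V → V) (hLC : IsLeviCivita g nab)
    (Bop : V →ₗ[ℝ] V) (hBsym : ∀ x y : V, g (Bop x) y = g x (Bop y)) :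
    ((∀ x y : V, nab x (Bop y) - Bop (nab x y) = nab y (Bop x) - Bop (nab y x)) ↔
      ((∀ z : V, IsCentral z → IsCentral (Bop z)) ∧
        ∀ x y : V, Bop ⁅x, y⁆ = ⁅Bop x, y⁆)) ∧
    (((∀ z : V, IsCentral z → IsCentral (Bop z)) ∧
        ∀ x y : V, Bop ⁅x, y⁆ = ⁅Bop x, y⁆) →
      ∀ x y : V, nab x (Bop y) = Bop (nab x y)) := by
  have nd : ∀ u : V, g u u = 0 → u = 0 := by
    intro u hu
    by_contra h
    have := hpos u h
    linarith
  have nd2 : ∀ u v : V, (∀ w, g u w = g v w) → u = v := by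
    intro u v h
    have h1 : g (u - v) (u - v) = 0 := by
      rw [map_sub g u v, LinearMap.sub_apply, h, sub_self]
    exact sub_eq_zero.mp (nd _ h1)
  have sk : ∀ a b c : V, g ⁅a, b⁆ c = - g ⁅b, a⁆ c := by
    intro a b c
    rw [← lie_skew a b, map_neg, LinearMap.neg_apply]
  obtain ⟨-, hnil⟩ := h2
  have par : ((∀ z : V, IsCentral z → IsCentral (Bop z)) ∧
        ∀ x y : V, Bop ⁅x, y⁆ = ⁅Bop x, y⁆) →
      ∀ x y : V, nab x (Bop y) = Bop (nab x y) := by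
    rintro ⟨-, hB⟩ x y
    have hB' : ∀ a b : V, Bop ⁅a, b⁆ = ⁅a, Bop b⁆ := by
      intro a b
      rw [← lie_skew a b, map_neg, hB, lie_skew]
    apply nd2
    intro w
    have e1 := hLC x (Bop y) w
    have e2 := hLC x y (Bop w)
    rw [hBsym]
    rw [← hB', ← hB, hBsym, ← hBsym _ y] at e1
    rw [← hB', ← hB] at e2
    linarith
  refine ⟨⟨fun hC => ?_, fun h x y => ?_⟩, par⟩
  · have F : ∀ x y w : V, g ⁅x, Bop y⁆ w + g ⁅Bop x, y⁆ w - g ⁅Bop y, w⁆ x + g ⁅Bop x, w⁆ y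
        + g ⁅w, x⁆ (Bop y) - g ⁅w, y⁆ (Bop x) - 2 * g ⁅x, y⁆ (Bop w) = 0 := by
      intro x y w
      have h := congrArg (fun u => g u w) (hC x y)
      simp only [map_sub, LinearMap.sub_apply, hBsym] at h
      have e1 := hLC x (Bop y) w
      have e2 := hLC x y (Bop w)
      have e3 := hLC y (Bop x) w
      have e4 := hLC y x (Bop w)
      have s1 := sk y (Bop w) x
      have s2 := sk x (Bop w) y
      have s3 := sk y x (Bop w)
      have s4 := sk y (Bop x) w
      linarith
    have F1 : ∀ z y w : V, IsCentral z →
        g ⁅Bop z, y⁆ w + g ⁅Bop z, w⁆ y - g ⁅Bop y, w⁆ z - g ⁅w, y⁆ (Bop z) = 0 := by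
      intro z y w hz
      have h := F z y w
      have hz' : ⁅w, z⁆ = 0 := by rw [← lie_skew, hz, neg_zero]
      rw [hz, hz, hz'] at h
      simp only [map_zero, LinearMap.zero_apply] at h
      linarith
    have cen : ∀ z : V, IsCentral z → IsCentral (Bop z) := by
      have K : ∀ z y w : V, IsCentral z → IsCentral y →
          2 * g ⁅Bop z, w⁆ y = g ⁅Bop y, w⁆ z := by
        intro z y w hz hy
        have a := F1 z y w hz
        have b := F1 z w y hz
        have c := sk w y (Bop z)
        have d : ⁅Bop w, y⁆ = 0 := by rw [← lie_skew, hy, neg_zero]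
        have e : ⁅Bop z, y⁆ = 0 := by rw [← lie_skew, hy, neg_zero]
        rw [e] at a b
        rw [d] at b
        simp only [map_zero, LinearMap.zero_apply] at a b
        linarith
      intro z hz w
      apply nd
      have hc : IsCentral ⁅Bop z, w⁆ := fun v => hnil _ _ v
      have a := K z _ w hz hc
      have b := K _ z w hc hz
      linarith
    refine ⟨cen, ?_⟩
    have S : ∀ y w : V, ⁅Bop y, w⁆ = ⁅y, Bop w⁆ := by
      intro y w
      have hc : IsCentral (⁅Bop y, w⁆ - ⁅y, Bop w⁆) := fun v => by
        rw [sub_lie, hnil, hnil, sub_zero]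
      apply sub_eq_zero.mp
      apply nd
      generalize hz : ⁅Bop y, w⁆ - ⁅y, Bop w⁆ = z at hc
      have a := F1 z y w hc
      have b := F1 z w y hc
      rw [cen z hc, cen z hc] at a b
      have c := sk w y (Bop z)
      have d := sk y (Bop w) z
      nth_rewrite 1 [← hz]
      simp only [map_zero, map_sub, LinearMap.sub_apply, LinearMap.zero_apply] at a b ⊢
      linarith
    intro x y
    have hc : IsCentral (Bop ⁅x, y⁆ - ⁅Bop x, y⁆) := fun v => by
      rw [sub_lie, hnil, cen _ (fun u => hnil _ _ u), sub_zero]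
    apply sub_eq_zero.mp
    apply nd
    generalize hz : Bop ⁅x, y⁆ - ⁅Bop x, y⁆ = z at hc
    have a := F1 z x y hc
    rw [cen z hc, cen z hc] at a
    have c := sk y x (Bop z)
    nth_rewrite 1 [← hz]
    simp only [map_zero, map_sub, LinearMap.sub_apply, LinearMap.zero_apply, hBsym] at a ⊢
    linarith
  · rw [par h, par h, sub_self, sub_self]
end

section
/- Let G be a connected simple graph on the vertex set {1,…,n} (n ≥ 2) with non-empty edge set E, and let (𝔫_G, ⟨·,·⟩) be the associated real metric Lie algebra with orthonormal basis {e_i, f_i : 1 ≤ i ≤ n} ∪ {z_s, w_s : s ∈ E}. Then the space of Killing–Yano tensors on (𝔫_G, ⟨·,·⟩) is a one-dimensional real vector space; explicitly, every Killing–Yano tensor T equals a·T₀ for a unique a ∈ ℝ, where T₀ is the endomorphism determined by T₀e_i = f_i, T₀f_i = −e_i, T₀z_s = 3w_s, T₀w_s = −3z_s. -/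
/-- for a connected graph G, the space of KY tensors on the metric Lie
algebra 𝔫_G is one-dimensional, spanned by T₀ with T₀e_i = f_i, T₀f_i = -e_i,
T₀z_s = 3w_s, T₀w_s = -3z_s. -/
theorem statement_14
    (n : ℕ) (hn : 2 ≤ n) (G : SimpleGraph (Fin n))
    (hconn : G.Connected) (hE : G.edgeSet.Nonempty)
    (V : Type*) [LieRing V] [LieAlgebra ℝ V]
    (B : V →ₗ[ℝ] V →ₗ[ℝ] ℝ)
    (hsymm : ∀ x y : V, B x y = B y x) (hpos : ∀ x : V, x ≠ 0 → 0 < B x x)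
    (e f : Fin n → V) (z w : G.edgeSet → V)
    -- the basis {e i, f i, z s, w s} is orthonormal
    (hee : ∀ i j, B (e i) (e j) = if i = j then 1 else 0)
    (hff : ∀ i j, B (f i) (f j) = if i = j then 1 else 0)
    (hzz : ∀ s t, B (z s) (z t) = if s = t then 1 else 0)
    (hww : ∀ s t, B (w s) (w t) = if s = t then 1 else 0)
    (hef : ∀ i j, B (e i) (f j) = 0)
    (hez : ∀ i s, B (e i) (z s) = 0)
    (hew : ∀ i s, B (e i) (w s) = 0)
    (hfz : ∀ i s, B (f i) (z s) = 0)
    (hfw : ∀ i s, B (f i) (w s) = 0)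
    (hzw : ∀ s t, B (z s) (w t) = 0)
    -- ... and spans V
    (hspan : Submodule.span ℝ
      (Set.range e ∪ Set.range f ∪ Set.range z ∪ Set.range w) = ⊤)
    -- the bracket relations of the Lie algebra 𝔫_G
    (hbee : ∀ i j, ∀ h : G.Adj i j, i < j →
        ⁅e i, e j⁆ = z ⟨s(i, j), G.mem_edgeSet.mpr h⟩)
    (hbff : ∀ i j, ∀ h : G.Adj i j, i < j →
        ⁅f i, f j⁆ = -z ⟨s(i, j), G.mem_edgeSet.mpr h⟩)
    (hbef : ∀ i j, ∀ h : G.Adj i j, i < j →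
        ⁅e i, f j⁆ = w ⟨s(i, j), G.mem_edgeSet.mpr h⟩)
    (hbfe : ∀ i j, ∀ h : G.Adj i j, i < j →
        ⁅f i, e j⁆ = w ⟨s(i, j), G.mem_edgeSet.mpr h⟩)
    (hnadj : ∀ i j, ¬ G.Adj i j →
        ⁅e i, e j⁆ = 0 ∧ ⁅e i, f j⁆ = 0 ∧ ⁅f i, e j⁆ = 0 ∧ ⁅f i, f j⁆ = 0)
    (hzc : ∀ s, IsCentral (z s)) (hwc : ∀ s, IsCentral (w s)) :
    (∀ a : ℝ, ∃ T : V →ₗ[ℝ] V, IsKY B T ∧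
        (∀ i, T (e i) = a • f i) ∧ (∀ i, T (f i) = -(a • e i)) ∧
        (∀ s, T (z s) = (3 * a) • w s) ∧ (∀ s, T (w s) = -((3 * a) • z s))) ∧
    (∀ T : V →ₗ[ℝ] V, IsKY B T → ∃! a : ℝ,
        (∀ i, T (e i) = a • f i) ∧ (∀ i, T (f i) = -(a • e i)) ∧
        (∀ s, T (z s) = (3 * a) • w s) ∧ (∀ s, T (w s) = -((3 * a) • z s))) := by
  classical
  have hfe : ∀ i j, B (f i) (e j) = 0 := fun i j => by rw [hsymm, hef]
  have hze : ∀ s i, B (z s) (e i) = 0 := fun i j => by rw [hsymm, hez]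
  have hwe : ∀ s i, B (w s) (e i) = 0 := fun i j => by rw [hsymm, hew]
  have hzf : ∀ s i, B (z s) (f i) = 0 := fun i j => by rw [hsymm, hfz]
  have hwf : ∀ s i, B (w s) (f i) = 0 := fun i j => by rw [hsymm, hfw]
  have hwz : ∀ s t, B (w s) (z t) = 0 := fun i j => by rw [hsymm, hzw]
  -- induction principle on the basis
  have ind : ∀ P : V → Prop, (∀ i, P (e i)) → (∀ i, P (f i)) → (∀ s, P (z s)) →
      (∀ s, P (w s)) → (∀ x y, P x → P y → P (x + y)) → (∀ (c : ℝ) x, P x → P (c • x)) →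
      ∀ x, P x := by
    intro P h1 h2 h3 h4 hadd hsmul x
    have hx : x ∈ Submodule.span ℝ
      (Set.range e ∪ Set.range f ∪ Set.range z ∪ Set.range w) := by
      rw [hspan]; trivial
    obtain ⟨s0, hs0⟩ := hE
    induction hx using Submodule.span_induction with
    | mem x hx =>
      rcases hx with ((⟨i, rfl⟩ | ⟨i, rfl⟩) | ⟨i, rfl⟩) | ⟨i, rfl⟩
      · exact h1 i
      · exact h2 i
      · exact h3 i
      · exact h4 i
    | zero => simpa using hsmul 0 _ (h3 ⟨s0, hs0⟩)
    | add x y _ _ hx hy => exact hadd x y hx hy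
    | smul c x _ hx => exact hsmul c x hx
  -- nondegeneracy
  have nondeg : ∀ x y : V, (∀ i, B x (e i) = B y (e i)) → (∀ i, B x (f i) = B y (f i)) →
      (∀ s, B x (z s) = B y (z s)) → (∀ s, B x (w s) = B y (w s)) → x = y := by
    intro x y h1 h2 h3 h4
    have key : ∀ v, B (x - y) v = 0 := by
      apply ind
      · intro i; simp [h1]
      · intro i; simp [h2]
      · intro i; simp [h3]
      · intro i; simp [h4]
      · intro u v hu hv; rw [map_add, hu, hv, add_zero]
      · intro c u hu; rw [map_smul, hu, smul_zero]
    by_contra hne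
    exact absurd (key (x - y)) (ne_of_gt (hpos _ (sub_ne_zero.mpr hne)))
  -- brackets
  have H : ∀ i j (h : G.Adj i j), ∃ ε : ℝ, ε * ε = 1 ∧
      ⁅e i, e j⁆ = ε • z ⟨s(i, j), G.mem_edgeSet.mpr h⟩ ∧
      ⁅e i, f j⁆ = ε • w ⟨s(i, j), G.mem_edgeSet.mpr h⟩ ∧
      ⁅f i, e j⁆ = ε • w ⟨s(i, j), G.mem_edgeSet.mpr h⟩ ∧
      ⁅f i, f j⁆ = -(ε • z ⟨s(i, j), G.mem_edgeSet.mpr h⟩) := by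
    intro i j h
    rcases lt_or_gt_of_ne h.ne with hl | hl
    · exact ⟨1, by norm_num, by simp [hbee i j h hl], by simp [hbef i j h hl],
        by simp [hbfe i j h hl], by simp [hbff i j h hl]⟩
    · have hs : (⟨s(i, j), G.mem_edgeSet.mpr h⟩ : G.edgeSet) =
          ⟨s(j, i), G.mem_edgeSet.mpr h.symm⟩ := Subtype.ext Sym2.eq_swap
      refine ⟨-1, by norm_num, ?_, ?_, ?_, ?_⟩
      · rw [hs, ← lie_skew, hbee j i h.symm hl]; simp
      · rw [hs, ← lie_skew, hbfe j i h.symm hl]; simp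
      · rw [hs, ← lie_skew, hbef j i h.symm hl]; simp
      · rw [hs, ← lie_skew, hbff j i h.symm hl]; simp
  have Ffe : ∀ i j, ⁅f i, e j⁆ = ⁅e i, f j⁆ := by
    intro i j
    by_cases h : G.Adj i j
    · obtain ⟨ε, -, h1, h2, h3, h4⟩ := H i j h
      rw [h3, h2]
    · obtain ⟨h1, h2, h3, h4⟩ := hnadj i j h
      rw [h3, h2]
  have Fff : ∀ i j, ⁅f i, f j⁆ = -⁅e i, e j⁆ := by
    intro i j
    by_cases h : G.Adj i j
    · obtain ⟨ε, -, h1, h2, h3, h4⟩ := H i j h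
      rw [h4, h1]
    · obtain ⟨h1, h2, h3, h4⟩ := hnadj i j h
      rw [h4, h1, neg_zero]
  have zl : ∀ s (x : V), ⁅z s, x⁆ = 0 := fun s x => hzc s x
  have wl : ∀ s (x : V), ⁅w s, x⁆ = 0 := fun s x => hwc s x
  have zr : ∀ s (x : V), ⁅x, z s⁆ = 0 := fun s x => by rw [← lie_skew, zl, neg_zero]
  have wr : ∀ s (x : V), ⁅x, w s⁆ = 0 := fun s x => by rw [← lie_skew, wl, neg_zero]
  have cross : ∀ i l k j, B ⁅e i, e l⁆ ⁅e k, f j⁆ = 0 := by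
    intro i l k j
    by_cases h : G.Adj i l
    · by_cases h' : G.Adj k j
      · obtain ⟨ε, -, h1, -⟩ := H i l h
        obtain ⟨δ, -, -, h2, -⟩ := H k j h'
        rw [h1, h2]; simp [hzw]
      · rw [(hnadj k j h').2.1]; simp
    · rw [(hnadj i l h).1]; simp
  have cross' : ∀ i l k j, B ⁅e i, f l⁆ ⁅e k, e j⁆ = 0 := by
    intro i l k j
    rw [hsymm, cross]
  have gram : ∀ i l k j, s(i, l) ≠ s(k, j) → B ⁅e i, e l⁆ ⁅e k, e j⁆ = 0 ∧
      B ⁅e i, f l⁆ ⁅e k, f j⁆ = 0 := by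
    intro i l k j hne
    by_cases h : G.Adj i l
    · by_cases h' : G.Adj k j
      · obtain ⟨ε, -, h1, h3, -⟩ := H i l h
        obtain ⟨δ, -, h2, h4, -⟩ := H k j h'
        rw [h1, h2, h3, h4]
        constructor
        · rw [map_smul, map_smul, LinearMap.smul_apply, hzz, if_neg]
          · simp
          · exact fun hh => hne (congrArg Subtype.val hh)
        · rw [map_smul, map_smul, LinearMap.smul_apply, hww, if_neg]
          · simp
          · exact fun hh => hne (congrArg Subtype.val hh)
      · rw [(hnadj k j h').2.1, (hnadj k j h').1]; simp
    · rw [(hnadj i l h).1, (hnadj i l h).2.1]; simp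
  have self : ∀ k j, G.Adj k j → B ⁅e k, e j⁆ ⁅e k, e j⁆ = 1 ∧
      B ⁅e k, f j⁆ ⁅e k, f j⁆ = 1 := by
    intro k j h
    obtain ⟨ε, h0, h1, h2, -⟩ := H k j h
    rw [h1, h2]
    constructor
    · rw [map_smul, map_smul, LinearMap.smul_apply, hzz, if_pos rfl]; simpa using h0
    · rw [map_smul, map_smul, LinearMap.smul_apply, hww, if_pos rfl]; simpa using h0
  have nes : ∀ i k j : Fin n, i ≠ k → s(i, j) ≠ s(k, j) := by
    intro i k j h hh
    exact h (Sym2.congr_left.mp hh)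
  have P1 : ∀ k j, G.Adj k j → ∀ x, B ⁅x, e j⁆ ⁅e k, e j⁆ = B x (e k) := by
    intro k j h
    apply ind
    · intro i
      by_cases hik : i = k
      · subst hik; rw [(self i j h).1, hee, if_pos rfl]
      · rw [(gram i j k j (nes i k j hik)).1, hee, if_neg hik]
    · intro i; rw [Ffe, cross', hfe]
    · intro s; rw [zl, hze]; simp
    · intro s; rw [wl, hwe]; simp
    · intro x y hx hy; rw [add_lie, map_add, map_add, LinearMap.add_apply, LinearMap.add_apply, hx, hy]
    · intro c x hx; rw [smul_lie, map_smul, map_smul, LinearMap.smul_apply, LinearMap.smul_apply, hx]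
  have P2 : ∀ k j, G.Adj k j → ∀ x, B ⁅x, e j⁆ ⁅e k, f j⁆ = B x (f k) := by
    intro k j h
    apply ind
    · intro i; rw [cross, hef]
    · intro i
      rw [Ffe]
      by_cases hik : i = k
      · subst hik; rw [(self i j h).2, hff, if_pos rfl]
      · rw [(gram i j k j (nes i k j hik)).2, hff, if_neg hik]
    · intro s; rw [zl, hzf]; simp
    · intro s; rw [wl, hwf]; simp
    · intro x y hx hy; rw [add_lie, map_add, map_add, LinearMap.add_apply, LinearMap.add_apply, hx, hy]
    · intro c x hx; rw [smul_lie, map_smul, map_smul, LinearMap.smul_apply, LinearMap.smul_apply, hx]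
  have nes' : ∀ i k j l : Fin n, i ≠ k → i ≠ j → s(i, l) ≠ s(k, j) := by
    intro i k j l h1 h2 hh
    rcases Sym2.eq_iff.mp hh with h | h
    · exact h1 h.1
    · exact h2 h.1
  have P3 : ∀ i k j, i ≠ k → i ≠ j → ∀ y, B ⁅e i, y⁆ ⁅e k, e j⁆ = 0 ∧ B ⁅e i, y⁆ ⁅e k, f j⁆ = 0 ∧
      B ⁅f i, y⁆ ⁅e k, e j⁆ = 0 ∧ B ⁅f i, y⁆ ⁅e k, f j⁆ = 0 := by
    intro i k j h1 h2
    apply ind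
    · intro l
      rw [Ffe, cross, cross', (gram i l k j (nes' i k j l h1 h2)).1,
        (gram i l k j (nes' i k j l h1 h2)).2]; simp
    · intro l
      rw [Fff, map_neg, LinearMap.neg_apply, LinearMap.neg_apply, cross, cross',
        (gram i l k j (nes' i k j l h1 h2)).1, (gram i l k j (nes' i k j l h1 h2)).2]; simp
    · intro s; rw [zr, zr]; simp
    · intro s; rw [wr, wr]; simp
    · rintro x y ⟨a1, a2, a3, a4⟩ ⟨b1, b2, b3, b4⟩
      simp [lie_add, a1, a2, a3, a4, b1, b2, b3, b4]
    · rintro c x ⟨a1, a2, a3, a4⟩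
      simp [lie_smul, a1, a2, a3, a4]
  have nb : ∀ k, ∃ j, G.Adj k j := by
    intro k
    have : Nontrivial (Fin n) := Fin.nontrivial_iff_two_le.mpr hn
    exact hconn.preconnected.exists_adj_of_nontrivial k
  have KK : ∀ c, IsCentral c → ∀ k, B c (e k) = 0 ∧ B c (f k) = 0 := by
    intro c hc k
    obtain ⟨j, h⟩ := nb k
    constructor
    · rw [← P1 k j h, hc]; simp
    · rw [← P2 k j h, hc]; simp
  have ve : ∀ i, InVperp B (e i) := fun i c hc => by rw [hsymm, (KK c hc i).1]
  have vf : ∀ i, InVperp B (f i) := fun i c hc => by rw [hsymm, (KK c hc i).2]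
  constructor
  · intro a
    let T : V →ₗ[ℝ] V :=
      (∑ i, a • ((B.flip (e i)).smulRight (f i) - (B.flip (f i)).smulRight (e i))) +
      ∑ s, (3 * a) • ((B.flip (z s)).smulRight (w s) - (B.flip (w s)).smulRight (z s))
    have hT : ∀ x, T x = (∑ i, a • (B x (e i) • f i - B x (f i) • e i)) +
        ∑ s, (3 * a) • (B x (z s) • w s - B x (w s) • z s) := by
      intro x; simp [T, LinearMap.sum_apply]
    have Te : ∀ i, T (e i) = a • f i := by
      intro i; rw [hT]; simp [hee, hef, hez, hew]
    have Tf : ∀ i, T (f i) = -(a • e i) := by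
      intro i; rw [hT]; simp [hff, hfe, hfz, hfw]
    have Tz : ∀ s, T (z s) = (3 * a) • w s := by
      intro i; rw [hT]; simp [hze, hzf, hzz, hzw]
    have Tw : ∀ s, T (w s) = -((3 * a) • z s) := by
      intro i; rw [hT]; simp [hwe, hwf, hwz, hww]
    refine ⟨T, ⟨?_, ?_, ?_⟩, Te, Tf, Tz, Tw⟩
    · intro x y
      rw [hT, hT]
      simp only [map_add, map_sum, map_smul, map_sub, LinearMap.add_apply, LinearMap.sum_apply,
        LinearMap.smul_apply, LinearMap.sub_apply, smul_eq_mul]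
      rw [neg_add, ← Finset.sum_neg_distrib, ← Finset.sum_neg_distrib]
      congr 1
      · refine Finset.sum_congr rfl fun i _ => ?_
        rw [hsymm (f i) y, hsymm (e i) y]; ring
      · refine Finset.sum_congr rfl fun i _ => ?_
        rw [hsymm (z i) y, hsymm (w i) y]; ring
    · intro c hc
      intro y
      rw [hT]
      simp [(KK c hc _).1, (KK c hc _).2, sum_lie, zl, wl]
    · intro x y _ _
      have T1 : ∀ i j, T ⁅e i, e j⁆ = (3 * a) • ⁅e i, f j⁆ ∧
          T ⁅e i, f j⁆ = -((3 * a) • ⁅e i, e j⁆) := by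
        intro i j
        by_cases h : G.Adj i j
        · obtain ⟨ε, -, h1, h2, -⟩ := H i j h
          rw [h1, h2, map_smul, map_smul, Tz, Tw, smul_comm, smul_neg, smul_comm ε]
          exact ⟨rfl, rfl⟩
        · rw [(hnadj i j h).1, (hnadj i j h).2.1]; simp
      revert x y
      have main : ∀ x y, T ⁅x, y⁆ = (3 : ℝ) • ⁅T x, y⁆ := by
        intro x y
        revert x
        apply ind
        · intro i
          rw [Te]
          revert y
          apply ind
          · intro j; rw [(T1 i j).1, smul_lie, Ffe, smul_smul]
          · intro j; rw [(T1 i j).2, smul_lie, Fff, smul_smul, smul_neg]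
          · intro s; simp [zr]
          · intro s; simp [wr]
          · intro x y hx hy; rw [lie_add, map_add, hx, hy, lie_add, smul_add]
          · intro c x hx; rw [lie_smul, map_smul, hx, lie_smul, smul_comm]
        · intro i
          rw [Tf]
          revert y
          apply ind
          · intro j; rw [Ffe, (T1 i j).2, neg_lie, smul_lie, smul_neg, smul_smul]
          · intro j; rw [Fff, map_neg, (T1 i j).1, neg_lie, smul_lie, smul_neg, smul_smul]
          · intro s; simp [zr]
          · intro s; simp [wr]
          · intro x y hx hy; rw [lie_add, map_add, hx, hy, lie_add, smul_add]
          · intro c x hx; rw [lie_smul, map_smul, hx, lie_smul, smul_comm]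
        · intro s; rw [Tz]; simp [zl, wl]
        · intro s; rw [Tw]; simp [zl, wl]
        · intro x y hx hy; rw [add_lie, map_add, hx, hy, map_add, add_lie, smul_add]
        · intro c x hx; rw [smul_lie, map_smul, hx, map_smul, smul_lie, smul_comm]
      intro x y _ _
      exact main x y
  · rintro T ⟨hskew, hcen, hky⟩
    have hky' : ∀ x y, InVperp B x → InVperp B y → ⁅T x, y⁆ = ⁅x, T y⁆ := by
      intro x y hx hy
      have h1 := hky x y hx hy
      have h2 := hky y x hy hx
      rw [← lie_skew, map_neg, h2, ← smul_neg, lie_skew] at h1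
      exact (smul_right_injective V (by norm_num : (3 : ℝ) ≠ 0) h1).symm
    have vanish : ∀ x y, InVperp B x → InVperp B y → ⁅x, y⁆ = 0 → ⁅T x, y⁆ = 0 := by
      intro x y hx hy h
      have h1 := hky x y hx hy
      rw [h, map_zero] at h1
      exact (smul_eq_zero.mp h1.symm).resolve_left (by norm_num)
    have off : ∀ i k, i ≠ k → B (T (e i)) (e k) = 0 ∧ B (T (e i)) (f k) = 0 ∧
        B (T (f i)) (e k) = 0 ∧ B (T (f i)) (f k) = 0 := by
      intro i k hik
      obtain ⟨j, h⟩ := nb k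
      rw [← P1 k j h, ← P2 k j h, ← P1 k j h, ← P2 k j h]
      by_cases hij : i = j
      · subst hij
        obtain ⟨h1, h2, h3, h4⟩ := hnadj i i (G.irrefl)
        rw [vanish _ _ (ve i) (ve i) h1, vanish _ _ (vf i) (ve i) h3]
        simp
      · rw [hky' _ _ (ve i) (ve j), hky' _ _ (vf i) (ve j)]
        exact P3 i k j hik hij _
    have hself : ∀ x, B (T x) x = 0 := by
      intro x
      have := hskew x x
      rw [hsymm x] at this
      linarith
    have TZ : ∀ x c, InVperp B x → IsCentral c → B (T x) c = 0 := by
      intro x c hx hc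
      rw [hskew, hx _ (hcen c hc), neg_zero]
    let α : Fin n → ℝ := fun i => B (T (e i)) (f i)
    have Te : ∀ i, T (e i) = α i • f i := by
      intro i
      apply nondeg
      · intro k
        by_cases hik : i = k
        · subst hik; simp [hself, hfe]
        · simp [(off i k hik).1, hfe]
      · intro k
        by_cases hik : i = k
        · subst hik; simp [α, hff]
        · simp [(off i k hik).2.1, hff, hik]
      · intro s; simp [TZ _ _ (ve i) (hzc s), hfz]
      · intro s; simp [TZ _ _ (ve i) (hwc s), hfw]
    have Tf : ∀ i, T (f i) = -(α i • e i) := by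
      intro i
      apply nondeg
      · intro k
        by_cases hik : i = k
        · subst hik; rw [hskew, hsymm]; simp [α, hee]
        · simp [(off i k hik).2.2.1, hee, hik]
      · intro k
        by_cases hik : i = k
        · subst hik; simp [hself, hef]
        · simp [(off i k hik).2.2.2, hef]
      · intro s; simp [TZ _ _ (vf i) (hzc s), hez]
      · intro s; simp [TZ _ _ (vf i) (hwc s), hew]
    have hadj : ∀ i j, G.Adj i j → α i = α j := by
      intro i j h
      have h1 := hky' _ _ (ve i) (ve j)
      rw [Te, Te, smul_lie, lie_smul, Ffe] at h1
      have h2 := congrArg (fun v => B v ⁅e i, f j⁆) h1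
      simpa [(self i j h).2] using h2
    have hconst : ∀ i j, α i = α j := by
      intro i j
      obtain ⟨p⟩ := hconn.preconnected i j
      induction p with
      | nil => rfl
      | cons h _ ih => exact (hadj _ _ h).trans ih
    let i0 : Fin n := ⟨0, by omega⟩
    have edge : ∀ s : G.edgeSet, ∃ i j, ∃ h : G.Adj i j, i < j ∧
        s = ⟨s(i, j), G.mem_edgeSet.mpr h⟩ := by
      rintro ⟨s, hs⟩
      induction s using Sym2.ind with
      | _ i j =>
        have h : G.Adj i j := G.mem_edgeSet.mp hs
        rcases lt_or_gt_of_ne h.ne with hl | hl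
        · exact ⟨i, j, h, hl, rfl⟩
        · exact ⟨j, i, h.symm, hl, Subtype.ext Sym2.eq_swap⟩
    refine ⟨α i0, ⟨?_, ?_, ?_, ?_⟩, ?_⟩
    · intro i; rw [Te, hconst i i0]
    · intro i; rw [Tf, hconst i i0]
    · intro s
      obtain ⟨i, j, h, hl, rfl⟩ := edge s
      rw [← hbee i j h hl, hky _ _ (ve i) (ve j), Te, smul_lie, hbfe i j h hl, hconst i i0,
        smul_smul]
    · intro s
      obtain ⟨i, j, h, hl, rfl⟩ := edge s
      rw [← hbef i j h hl, hky _ _ (ve i) (vf j), Te, smul_lie, hbff i j h hl, hconst i i0,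
        smul_neg, smul_neg, smul_smul]
    · rintro b ⟨hb, -⟩
      have h1 : α i0 = B (b • f i0) (f i0) := by rw [← hb i0]
      rw [h1]; simp [hff]
end

section
/- Let G be a connected simple graph on the vertex set {1,…,n} (n ≥ 2) with non-empty edge set E, and let (𝔫_G, ⟨·,·⟩) be the associated real metric Lie algebra. Then every non-zero Killing–Yano tensor on (𝔫_G, ⟨·,·⟩) is invertible. -/
set_option maxHeartbeats 4000000

theorem aux_pair {n : ℕ} {G : SimpleGraph (Fin n)} {V : Type*} [AddCommGroup V] [Module ℝ V]
    (B : V →ₗ[ℝ] V →ₗ[ℝ] ℝ) (z : G.edgeSet → V)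
    (hzz : ∀ s t, B (z s) (z t) = if s = t then 1 else 0)
    (Z : Fin n → Fin n → V) (hanti : ∀ i j, Z j i = - Z i j)
    (hadj : ∀ i j, ∀ h : G.Adj i j, i < j → Z i j = z ⟨s(i, j), G.mem_edgeSet.mpr h⟩)
    (hna : ∀ i j, ¬ G.Adj i j → Z i j = 0) (i j k l : Fin n) (hkl : G.Adj k l) :
    B (Z i j) (Z k l) = if i = k ∧ j = l then 1 else if i = l ∧ j = k then -1 else 0 := by
  have key : ∀ i j k l, G.Adj i j → i < j → G.Adj k l → k < l →
      B (Z i j) (Z k l) = if i = k ∧ j = l then 1 else 0 := by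
    intro i j k l h1 h2 h3 h4
    rw [hadj i j h1 h2, hadj k l h3 h4, hzz]
    have : ((⟨s(i, j), G.mem_edgeSet.mpr h1⟩ : G.edgeSet) = ⟨s(k, l), G.mem_edgeSet.mpr h3⟩)
        ↔ (i = k ∧ j = l) := by
      rw [Subtype.mk.injEq, Sym2.eq_iff]
      constructor
      · rintro (h | ⟨rfl, rfl⟩)
        · exact h
        · exact absurd h2 (not_lt.mpr h4.le)
      · exact Or.inl
    simp only [this]
  by_cases hij : G.Adj i j
  · rcases lt_or_gt_of_ne hij.ne with h1 | h1 <;> rcases lt_or_gt_of_ne hkl.ne with h2 | h2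
    · rw [key i j k l hij h1 hkl h2]; grind
    · rw [hanti l k, map_neg, key i j l k hij h1 hkl.symm h2]; grind
    · rw [hanti j i, map_neg, LinearMap.neg_apply, key j i k l hij.symm h1 hkl h2]; grind
    · rw [hanti j i, hanti l k, map_neg, map_neg, LinearMap.neg_apply,
        key j i l k hij.symm h1 hkl.symm h2]; grind
  · rw [hna i j hij]
    have h1 : ¬ (i = k ∧ j = l) := by rintro ⟨rfl, rfl⟩; exact hij hkl
    have h2 : ¬ (i = l ∧ j = k) := by rintro ⟨rfl, rfl⟩; exact hij hkl.symm
    simp [h1, h2]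


/-- for a connected graph G, every non-zero KY tensor on the metric
Lie algebra 𝔫_G is invertible. -/
theorem statement_15
    (n : ℕ) (hn : 2 ≤ n) (G : SimpleGraph (Fin n))
    (hconn : G.Connected) (hE : G.edgeSet.Nonempty)
    (V : Type*) [LieRing V] [LieAlgebra ℝ V]
    (B : V →ₗ[ℝ] V →ₗ[ℝ] ℝ)
    (hsymm : ∀ x y : V, B x y = B y x) (hpos : ∀ x : V, x ≠ 0 → 0 < B x x)
    (e f : Fin n → V) (z w : G.edgeSet → V)
    -- the basis {e i, f i, z s, w s} is orthonormal
    (hee : ∀ i j, B (e i) (e j) = if i = j then 1 else 0)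
    (hff : ∀ i j, B (f i) (f j) = if i = j then 1 else 0)
    (hzz : ∀ s t, B (z s) (z t) = if s = t then 1 else 0)
    (hww : ∀ s t, B (w s) (w t) = if s = t then 1 else 0)
    (hef : ∀ i j, B (e i) (f j) = 0)
    (hez : ∀ i s, B (e i) (z s) = 0)
    (hew : ∀ i s, B (e i) (w s) = 0)
    (hfz : ∀ i s, B (f i) (z s) = 0)
    (hfw : ∀ i s, B (f i) (w s) = 0)
    (hzw : ∀ s t, B (z s) (w t) = 0)
    -- ... and spans V
    (hspan : Submodule.span ℝ
      (Set.range e ∪ Set.range f ∪ Set.range z ∪ Set.range w) = ⊤)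
    -- the bracket relations of the Lie algebra 𝔫_G
    (hbee : ∀ i j, ∀ h : G.Adj i j, i < j →
        ⁅e i, e j⁆ = z ⟨s(i, j), G.mem_edgeSet.mpr h⟩)
    (hbff : ∀ i j, ∀ h : G.Adj i j, i < j →
        ⁅f i, f j⁆ = -z ⟨s(i, j), G.mem_edgeSet.mpr h⟩)
    (hbef : ∀ i j, ∀ h : G.Adj i j, i < j →
        ⁅e i, f j⁆ = w ⟨s(i, j), G.mem_edgeSet.mpr h⟩)
    (hbfe : ∀ i j, ∀ h : G.Adj i j, i < j →
        ⁅f i, e j⁆ = w ⟨s(i, j), G.mem_edgeSet.mpr h⟩)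
    (hnadj : ∀ i j, ¬ G.Adj i j →
        ⁅e i, e j⁆ = 0 ∧ ⁅e i, f j⁆ = 0 ∧ ⁅f i, e j⁆ = 0 ∧ ⁅f i, f j⁆ = 0)
    (hzc : ∀ s, IsCentral (z s)) (hwc : ∀ s, IsCentral (w s)) :
    ∀ T : V →ₗ[ℝ] V, IsKY B T → T ≠ 0 → Function.Bijective T := by
  rintro T ⟨hskew, hcen, hKY⟩ hT0
  have hZa : ∀ i j, ⁅e j, e i⁆ = -⁅e i, e j⁆ := fun i j => (lie_skew _ _).symm
  have hFF : ∀ i j, ⁅f i, f j⁆ = -⁅e i, e j⁆ := by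
    intro i j
    by_cases h : G.Adj i j
    · rcases lt_or_gt_of_ne h.ne with h1 | h1
      · rw [hbff i j h h1, hbee i j h h1]
      · rw [← lie_skew, hbff j i h.symm h1, ← lie_skew (e i), hbee j i h.symm h1]
    · rw [(hnadj i j h).1, (hnadj i j h).2.2.2, neg_zero]
  have hFE : ∀ i j, ⁅f i, e j⁆ = ⁅e i, f j⁆ := by
    intro i j
    by_cases h : G.Adj i j
    · rcases lt_or_gt_of_ne h.ne with h1 | h1
      · rw [hbef i j h h1, hbfe i j h h1]
      · rw [← lie_skew, hbef j i h.symm h1, ← lie_skew (e i), hbfe j i h.symm h1]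
    · rw [(hnadj i j h).2.1, (hnadj i j h).2.2.1]
  have hWa : ∀ i j, ⁅e j, f i⁆ = -⁅e i, f j⁆ := fun i j => by
    rw [← hFE i j, lie_skew]
  have pZ := aux_pair B z hzz (fun i j => ⁅e i, e j⁆) hZa hbee (fun i j h => (hnadj i j h).1)
  have pW := aux_pair B w hww (fun i j => ⁅e i, f j⁆) hWa hbef (fun i j h => (hnadj i j h).2.1)
  have pZW : ∀ i j k l, B ⁅e i, e j⁆ ⁅e k, f l⁆ = 0 := by
    have hz : ∀ i j, ⁅e i, e j⁆ = 0 ∨ ∃ s, ⁅e i, e j⁆ = z s ∨ ⁅e i, e j⁆ = - z s := by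
      intro i j
      by_cases h : G.Adj i j
      · rcases lt_or_gt_of_ne h.ne with h1 | h1
        · exact Or.inr ⟨_, Or.inl (hbee i j h h1)⟩
        · exact Or.inr ⟨_, Or.inr (by rw [hZa j i, hbee j i h.symm h1])⟩
      · exact Or.inl (hnadj i j h).1
    have hw : ∀ i j, ⁅e i, f j⁆ = 0 ∨ ∃ s, ⁅e i, f j⁆ = w s ∨ ⁅e i, f j⁆ = - w s := by
      intro i j
      by_cases h : G.Adj i j
      · rcases lt_or_gt_of_ne h.ne with h1 | h1
        · exact Or.inr ⟨_, Or.inl (hbef i j h h1)⟩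
        · exact Or.inr ⟨_, Or.inr (by rw [hWa j i, hbef j i h.symm h1])⟩
      · exact Or.inl (hnadj i j h).2.1
    intro i j k l
    rcases hz i j with h | ⟨s, h | h⟩ <;> rcases hw k l with h' | ⟨t, h' | h'⟩ <;>
      simp [h, h', hzw]
  have pWZ : ∀ i j k l, B ⁅e i, f j⁆ ⁅e k, e l⁆ = 0 := fun i j k l => by rw [hsymm, pZW]
  have hfe : ∀ i j, B (f i) (e j) = 0 := fun i j => by rw [hsymm, hef]
  have hze : ∀ s i, B (z s) (e i) = 0 := fun s i => by rw [hsymm, hez]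
  have hzf : ∀ s i, B (z s) (f i) = 0 := fun s i => by rw [hsymm, hfz]
  have hwe : ∀ s i, B (w s) (e i) = 0 := fun s i => by rw [hsymm, hew]
  have hwf : ∀ s i, B (w s) (f i) = 0 := fun s i => by rw [hsymm, hfw]
  -- induction over the spanning set
  have ind : ∀ P : V → Prop, (∀ i, P (e i)) → (∀ i, P (f i)) → (∀ s, P (z s)) → (∀ s, P (w s)) →
      P 0 → (∀ x y, P x → P y → P (x + y)) → (∀ (a : ℝ) x, P x → P (a • x)) → ∀ x, P x := by
    intro P h1 h2 h3 h4 h5 h6 h7 x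
    have hx : x ∈ Submodule.span ℝ
      (Set.range e ∪ Set.range f ∪ Set.range z ∪ Set.range w) := by rw [hspan]; trivial
    induction hx using Submodule.span_induction with
    | mem x h =>
      rcases h with ((⟨i, rfl⟩ | ⟨i, rfl⟩) | ⟨i, rfl⟩) | ⟨i, rfl⟩
      exacts [h1 i, h2 i, h3 i, h4 i]
    | zero => exact h5
    | add x y _ _ hx hy => exact h6 x y hx hy
    | smul a x _ hx => exact h7 a x hx
  have hext : ∀ u v : V, (∀ i, B u (e i) = B v (e i)) → (∀ i, B u (f i) = B v (f i)) →
      (∀ s, B u (z s) = B v (z s)) → (∀ s, B u (w s) = B v (w s)) → u = v := by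
    intro u v h1 h2 h3 h4
    have h : ∀ x, B u x = B v x := by
      apply ind (fun x => B u x = B v x) h1 h2 h3 h4
      · simp
      · intro x y hx hy; simp [hx, hy]
      · intro a x hx; simp [hx]
    by_contra hne
    have := hpos (u - v) (sub_ne_zero.mpr hne)
    rw [LinearMap.map_sub₂, h, sub_self] at this
    exact lt_irrefl _ this
  have cEZ : ∀ i k j, G.Adj k j → ∀ u, B ⁅u, e i⁆ ⁅e k, e j⁆ =
      if i = j then B u (e k) else if i = k then - B u (e j) else 0 := by
    intro i k j h
    have := h.ne
    apply ind
    · intro l; rw [pZ _ _ _ _ h, hee, hee]; grind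
    · intro l; rw [hFE, pWZ, hfe, hfe]; simp
    · intro s; rw [hzc s, hze, hze]; simp
    · intro s; rw [hwc s, hwe, hwe]; simp
    · simp
    · intro x y hx hy; rw [add_lie, map_add, LinearMap.add_apply, hx, hy]; simp only [map_add, LinearMap.add_apply]; split_ifs <;> ring
    · intro a x hx; rw [smul_lie, map_smul, LinearMap.smul_apply, hx]; simp
  have cEW : ∀ i k j, G.Adj k j → ∀ u, B ⁅u, e i⁆ ⁅e k, f j⁆ =
      if i = j then B u (f k) else if i = k then - B u (f j) else 0 := by
    intro i k j h
    have := h.ne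
    apply ind
    · intro l; rw [pZW, hef, hef]; simp
    · intro l; rw [hFE, pW _ _ _ _ h, hff, hff]; grind
    · intro s; rw [hzc s, hzf, hzf]; simp
    · intro s; rw [hwc s, hwf, hwf]; simp
    · simp
    · intro x y hx hy; rw [add_lie, map_add, LinearMap.add_apply, hx, hy]; simp only [map_add, LinearMap.add_apply]; split_ifs <;> ring
    · intro a x hx; rw [smul_lie, map_smul, LinearMap.smul_apply, hx]; simp
  have cFZ : ∀ i k j, G.Adj k j → ∀ u, B ⁅u, f i⁆ ⁅e k, e j⁆ =
      if i = j then - B u (f k) else if i = k then B u (f j) else 0 := by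
    intro i k j h
    have := h.ne
    apply ind
    · intro l; rw [pWZ, hef, hef]; simp
    · intro l; rw [hFF, map_neg, LinearMap.neg_apply, pZ _ _ _ _ h, hff, hff]; grind
    · intro s; rw [hzc s, hzf, hzf]; simp
    · intro s; rw [hwc s, hwf, hwf]; simp
    · simp
    · intro x y hx hy; rw [add_lie, map_add, LinearMap.add_apply, hx, hy]; simp only [map_add, LinearMap.add_apply]; split_ifs <;> ring
    · intro a x hx; rw [smul_lie, map_smul, LinearMap.smul_apply, hx]; simp
  -- every vertex has a neighbour
  have hnb : ∀ k, ∃ j, G.Adj k j := by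
    intro k
    haveI : Nontrivial (Fin n) := Fin.nontrivial_iff_two_le.mpr hn
    exact hconn.preconnected.exists_adj_of_nontrivial k
  have eperp : ∀ i, InVperp B (e i) := by
    intro k c hc
    obtain ⟨j, hj⟩ := hnb k
    have := cEZ j k j hj c
    rw [hc] at this
    rw [hsymm]
    simpa using this.symm
  have fperp : ∀ i, InVperp B (f i) := by
    intro k c hc
    obtain ⟨j, hj⟩ := hnb k
    have := cEW j k j hj c
    rw [hc] at this
    rw [hsymm]
    simpa using this.symm
  have hsw : ∀ x y, InVperp B x → InVperp B y → ⁅T x, y⁆ = -⁅T y, x⁆ := by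
    intro x y hx hy
    have h1 := hKY x y hx hy
    have h2 := hKY y x hy hx
    rw [← lie_skew, map_neg, h2, ← smul_neg] at h1
    exact (smul_right_injective V (three_ne_zero (α := ℝ)) h1).symm
  have dEE : ∀ i k, B (T (e i)) (e k) = 0 := by
    intro i k
    by_cases hik : i = k
    · subst hik
      have := hskew (e i) (e i)
      rw [hsymm (e i)] at this; linarith
    obtain ⟨j, hj⟩ := hnb k
    have h := congrArg (fun x => B x ⁅e k, e j⁆) (hsw (e i) (e j) (eperp i) (eperp j))
    simp only [map_neg, LinearMap.neg_apply, cEZ _ k j hj, if_true, if_neg hik] at h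
    split_ifs at h with h1
    · subst h1; linarith
    · linarith
  have dEF : ∀ i k, i ≠ k → B (T (e i)) (f k) = 0 := by
    intro i k hik
    obtain ⟨j, hj⟩ := hnb k
    have h := congrArg (fun x => B x ⁅e k, f j⁆) (hsw (e i) (e j) (eperp i) (eperp j))
    simp only [map_neg, LinearMap.neg_apply, cEW _ k j hj, if_true, if_neg hik] at h
    split_ifs at h with h1
    · subst h1; linarith
    · linarith
  have dFF : ∀ i k, B (T (f i)) (f k) = 0 := by
    intro i k
    by_cases hik : i = k
    · subst hik
      have := hskew (f i) (f i)
      rw [hsymm (f i)] at this; linarith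
    obtain ⟨j, hj⟩ := hnb k
    have h := congrArg (fun x => B x ⁅e k, e j⁆) (hsw (f i) (f j) (fperp i) (fperp j))
    simp only [map_neg, LinearMap.neg_apply, cFZ _ k j hj, if_true, if_neg hik] at h
    split_ifs at h with h1
    · subst h1; linarith
    · linarith
  have dC : ∀ i j, G.Adj i j → B (T (e i)) (f i) = B (T (e j)) (f j) := by
    intro i j hij
    have h := congrArg (fun x => B x ⁅e i, f j⁆) (hsw (e i) (e j) (eperp i) (eperp j))
    simpa only [map_neg, LinearMap.neg_apply, cEW _ i j hij, if_true, if_neg hij.ne, neg_neg]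
      using h
  have i0 : Fin n := ⟨0, by omega⟩
  obtain ⟨c, hc⟩ : ∃ c, ∀ i, B (T (e i)) (f i) = c := by
    refine ⟨B (T (e i0)) (f i0), fun i => ?_⟩
    obtain ⟨p⟩ := hconn.preconnected i i0
    induction p with
    | nil => rfl
    | cons h _ ih => rw [dC _ _ h, ih]
  have hTe : ∀ i, T (e i) = c • f i := by
    intro i
    apply hext
    · intro k; simp [dEE, hfe]
    · intro k
      by_cases hik : i = k
      · subst hik; simp [hc, hff]
      · simp [dEF i k hik, hff, hik]
    · intro s; rw [hskew, eperp i _ (hcen _ (hzc s))]; simp [hfz]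
    · intro s; rw [hskew, eperp i _ (hcen _ (hwc s))]; simp [hfw]
  have hTf : ∀ i, T (f i) = -(c • e i) := by
    intro i
    apply hext
    · intro k
      rw [hskew, hTe]
      by_cases hik : i = k
      · subst hik; simp [hee, hff]
      · simp [hff, hee, hik]
    · intro k; simp [dFF, hef]
    · intro s; rw [hskew, fperp i _ (hcen _ (hzc s))]; simp [hez]
    · intro s; rw [hskew, fperp i _ (hcen _ (hwc s))]; simp [hew]
  have hTZ : ∀ i j, T ⁅e i, e j⁆ = (3 * c) • ⁅e i, f j⁆ := by
    intro i j
    rw [hKY _ _ (eperp i) (eperp j), hTe, smul_lie, hFE, smul_smul]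
  have hTW : ∀ i j, T ⁅e i, f j⁆ = -((3 * c) • ⁅e i, e j⁆) := by
    intro i j
    rw [hKY _ _ (eperp i) (fperp j), hTe, smul_lie, hFF, smul_smul, smul_neg]
  have hTzw : ∀ s, T (z s) = (3 * c) • w s ∧ T (w s) = -((3 * c) • z s) := by
    rintro ⟨s, hs⟩
    induction s using Sym2.ind with
    | _ i j =>
      have main : ∀ i j, ∀ h : G.Adj i j, i < j →
          T (z ⟨s(i, j), G.mem_edgeSet.mpr h⟩) = (3 * c) • w ⟨s(i, j), G.mem_edgeSet.mpr h⟩ ∧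
          T (w ⟨s(i, j), G.mem_edgeSet.mpr h⟩) = -((3 * c) • z ⟨s(i, j), G.mem_edgeSet.mpr h⟩) := by
        intro i j h h1
        rw [← hbee i j h h1, ← hbef i j h h1]
        exact ⟨hTZ i j, hTW i j⟩
      have h : G.Adj i j := hs
      rcases lt_or_gt_of_ne h.ne with h1 | h1
      · exact main i j h h1
      · have hh := main j i h.symm h1
        have he : (⟨s(i, j), hs⟩ : G.edgeSet) = ⟨s(j, i), G.mem_edgeSet.mpr h.symm⟩ :=
          Subtype.ext Sym2.eq_swap
        rw [he]; exact hh
  have hc0 : c ≠ 0 := by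
    intro h0
    apply hT0
    ext x
    revert x
    apply ind
    · intro i; simp [hTe, h0]
    · intro i; simp [hTf, h0]
    · intro i; simp [hTzw, h0]
    · intro i; simp [hTzw, h0]
    · simp
    · intro x y hx hy; simp [hx, hy]
    · intro a x hx; simp [hx]
  have h3c : (3 * c) ≠ 0 := mul_ne_zero three_ne_zero hc0
  have hsurj : Function.Surjective T := by
    intro x
    revert x
    apply ind
    · intro i; exact ⟨-(c⁻¹ • f i), by simp [hTf, smul_smul, hc0]⟩
    · intro i; exact ⟨c⁻¹ • e i, by simp [hTe, smul_smul, hc0]⟩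
    · intro s
      exact ⟨-((3 * c)⁻¹ • w s), by
        rw [map_neg, map_smul, (hTzw s).2, smul_neg, neg_neg, smul_smul, inv_mul_cancel₀ h3c,
          one_smul]⟩
    · intro s
      exact ⟨(3 * c)⁻¹ • z s, by
        rw [map_smul, (hTzw s).1, smul_smul, inv_mul_cancel₀ h3c, one_smul]⟩
    · exact ⟨0, map_zero T⟩
    · rintro x y ⟨a, rfl⟩ ⟨b, rfl⟩; exact ⟨a + b, map_add T a b⟩
    · rintro a x ⟨b, rfl⟩; exact ⟨a • b, map_smul T a b⟩
  refine ⟨?_, hsurj⟩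
  rw [injective_iff_map_eq_zero]
  intro x hx
  by_contra hne
  obtain ⟨y, rfl⟩ := hsurj x
  have := hpos _ hne
  rw [hskew, hx, map_zero, neg_zero] at this
  exact lt_irrefl _ this
end

section
/- Let G be a connected simple graph on the vertex set {1,…,n} (n ≥ 2) with non-empty edge set E, and let (𝔫_G, ⟨·,·⟩) be the associated real metric Lie algebra. If I is an endomorphism of 𝔫_G with I² = −Id, ⟨Ix,y⟩ = −⟨x,Iy⟩ for all x,y, and I⁅x,y⁆ = ⁅Ix,y⁆ for all x,y ∈ 𝔫_G (a bi-invariant complex structure Hermitian with respect to ⟨·,·⟩), then I = J or I = −J, where J is the endomorphism determined by Je_i = f_i, Jf_i = −e_i, Jz_s = w_s, Jw_s = −z_s. -/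
/-- for a connected graph G, any bi-invariant orthogonal complex
structure I on the metric Lie algebra 𝔫_G equals J or -J, where Je_i = f_i,
Jf_i = -e_i, Jz_s = w_s, Jw_s = -z_s. -/
theorem statement_16
    (n : ℕ) (hn : 2 ≤ n) (G : SimpleGraph (Fin n))
    (hconn : G.Connected) (hE : G.edgeSet.Nonempty)
    (V : Type*) [LieRing V] [LieAlgebra ℝ V]
    (B : V →ₗ[ℝ] V →ₗ[ℝ] ℝ)
    (hsymm : ∀ x y : V, B x y = B y x) (hpos : ∀ x : V, x ≠ 0 → 0 < B x x)
    (e f : Fin n → V) (z w : G.edgeSet → V)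
    -- the basis {e i, f i, z s, w s} is orthonormal
    (hee : ∀ i j, B (e i) (e j) = if i = j then 1 else 0)
    (hff : ∀ i j, B (f i) (f j) = if i = j then 1 else 0)
    (hzz : ∀ s t, B (z s) (z t) = if s = t then 1 else 0)
    (hww : ∀ s t, B (w s) (w t) = if s = t then 1 else 0)
    (hef : ∀ i j, B (e i) (f j) = 0)
    (hez : ∀ i s, B (e i) (z s) = 0)
    (hew : ∀ i s, B (e i) (w s) = 0)
    (hfz : ∀ i s, B (f i) (z s) = 0)
    (hfw : ∀ i s, B (f i) (w s) = 0)
    (hzw : ∀ s t, B (z s) (w t) = 0)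
    -- ... and spans V
    (hspan : Submodule.span ℝ
      (Set.range e ∪ Set.range f ∪ Set.range z ∪ Set.range w) = ⊤)
    -- the bracket relations of the Lie algebra 𝔫_G
    (hbee : ∀ i j, ∀ h : G.Adj i j, i < j →
        ⁅e i, e j⁆ = z ⟨s(i, j), G.mem_edgeSet.mpr h⟩)
    (hbff : ∀ i j, ∀ h : G.Adj i j, i < j →
        ⁅f i, f j⁆ = -z ⟨s(i, j), G.mem_edgeSet.mpr h⟩)
    (hbef : ∀ i j, ∀ h : G.Adj i j, i < j →
        ⁅e i, f j⁆ = w ⟨s(i, j), G.mem_edgeSet.mpr h⟩)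
    (hbfe : ∀ i j, ∀ h : G.Adj i j, i < j →
        ⁅f i, e j⁆ = w ⟨s(i, j), G.mem_edgeSet.mpr h⟩)
    (hnadj : ∀ i j, ¬ G.Adj i j →
        ⁅e i, e j⁆ = 0 ∧ ⁅e i, f j⁆ = 0 ∧ ⁅f i, e j⁆ = 0 ∧ ⁅f i, f j⁆ = 0)
    (hzc : ∀ s, IsCentral (z s)) (hwc : ∀ s, IsCentral (w s))
    (I : V →ₗ[ℝ] V) (hI2 : ∀ x : V, I (I x) = -x)
    (hIskew : ∀ x y : V, B (I x) y = - B x (I y))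
    (hIbi : ∀ x y : V, I ⁅x, y⁆ = ⁅I x, y⁆) :
    ((∀ i, I (e i) = f i) ∧ (∀ i, I (f i) = -e i) ∧
      (∀ s, I (z s) = w s) ∧ (∀ s, I (w s) = -z s)) ∨
    ((∀ i, I (e i) = -f i) ∧ (∀ i, I (f i) = e i) ∧
      (∀ s, I (z s) = -w s) ∧ (∀ s, I (w s) = z s)) := by
  classical
  have hext : ∀ φ ψ : V →ₗ[ℝ] ℝ, (∀ k, φ (e k) = ψ (e k)) → (∀ k, φ (f k) = ψ (f k)) →
      (∀ s, φ (z s) = ψ (z s)) → (∀ s, φ (w s) = ψ (w s)) → ∀ x, φ x = ψ x := by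
    intro φ ψ h1 h2 h3 h4 x
    have : φ = ψ := by
      apply LinearMap.ext_on hspan
      rintro y (((⟨k, rfl⟩ | ⟨k, rfl⟩) | ⟨k, rfl⟩) | ⟨k, rfl⟩)
      · exact h1 k
      · exact h2 k
      · exact h3 k
      · exact h4 k
    rw [this]
  have hvec : ∀ u v : V, (∀ k, B u (e k) = B v (e k)) → (∀ k, B u (f k) = B v (f k)) →
      (∀ s, B u (z s) = B v (z s)) → (∀ s, B u (w s) = B v (w s)) → u = v := by
    intro u v h1 h2 h3 h4
    by_contra hne
    have h := hpos (u - v) (sub_ne_zero.mpr hne)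
    have h' := hext (B u) (B v) h1 h2 h3 h4 (u - v)
    have h2 : B (u - v) (u - v) = B u (u - v) - B v (u - v) := by
      rw [LinearMap.map_sub B u v, LinearMap.sub_apply]
    rw [h2, h', sub_self] at h
    exact lt_irrefl _ h
  -- the sign of a pair
  let σ : Fin n → Fin n → ℝ := fun i j => if i < j then 1 else -1
  have hσ : ∀ i j, i < j → σ i j = 1 := fun i j h => by simp [σ, h]
  have hσ' : ∀ i j, j < i → σ i j = -1 := fun i j h => by simp [σ, not_lt.mpr h.le]
  have hswap : ∀ i j, ∀ h : G.Adj i j, (⟨s(i, j), G.mem_edgeSet.mpr h⟩ : G.edgeSet) =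
      ⟨s(j, i), G.mem_edgeSet.mpr h.symm⟩ := fun i j h => Subtype.ext Sym2.eq_swap
  have b1 : ∀ i j, ∀ h : G.Adj i j, ⁅e i, e j⁆ = σ i j • z ⟨s(i, j), G.mem_edgeSet.mpr h⟩ := by
    intro i j h
    rcases lt_or_gt_of_ne h.ne with hl | hl
    · rw [hσ i j hl, one_smul, hbee i j h hl]
    · rw [hσ' i j hl, ← lie_skew, hbee j i h.symm hl, hswap i j h, neg_one_smul]
  have b2 : ∀ i j, ∀ h : G.Adj i j, ⁅f i, e j⁆ = σ i j • w ⟨s(i, j), G.mem_edgeSet.mpr h⟩ := by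
    intro i j h
    rcases lt_or_gt_of_ne h.ne with hl | hl
    · rw [hσ i j hl, one_smul, hbfe i j h hl]
    · rw [hσ' i j hl, ← lie_skew, hbef j i h.symm hl, hswap i j h, neg_one_smul]
  -- the functional x ↦ B ⁅x, e j⁆ v
  let L : Fin n → V → V →ₗ[ℝ] ℝ := fun j v =>
    { toFun := fun x => B ⁅x, e j⁆ v
      map_add' := fun x y => by simp [add_lie]
      map_smul' := fun c x => by simp }
  have hL : ∀ j v x, L j v x = B ⁅x, e j⁆ v := fun _ _ _ => rfl
  have hLz : ∀ j v s, L j v (z s) = 0 := fun j v s => by rw [hL, hzc s]; simp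
  have hLw : ∀ j v s, L j v (w s) = 0 := fun j v s => by rw [hL, hwc s]; simp
  -- vanishing
  have hvan : ∀ j v, (∀ k, ∀ h : G.Adj k j, B (z ⟨s(k, j), G.mem_edgeSet.mpr h⟩) v = 0) →
      (∀ k, ∀ h : G.Adj k j, B (w ⟨s(k, j), G.mem_edgeSet.mpr h⟩) v = 0) →
      ∀ x : V, B ⁅x, e j⁆ v = 0 := by
    intro j v h1 h2 x
    have := hext (L j v) 0 ?_ ?_ ?_ ?_ x
    · simpa [hL] using this
    · intro k
      rw [hL]
      by_cases h : G.Adj k j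
      · rw [b1 k j h]; simp [h1 k h]
      · rw [(hnadj k j h).1]; simp
    · intro k
      rw [hL]
      by_cases h : G.Adj k j
      · rw [b2 k j h]; simp [h2 k h]
      · rw [(hnadj k j h).2.2.1]; simp
    · intro s; simp [hLz]
    · intro s; simp [hLw]
  have hve : ∀ (j k : Fin n) (x : V), B ⁅x, e j⁆ (e k) = 0 := fun j k =>
    hvan j _ (fun l h => by rw [hsymm, hez]) (fun l h => by rw [hsymm, hew])
  have hvf : ∀ (j k : Fin n) (x : V), B ⁅x, e j⁆ (f k) = 0 := fun j k =>
    hvan j _ (fun l h => by rw [hsymm, hfz]) (fun l h => by rw [hsymm, hfw])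
  have hvz : ∀ j (t : G.edgeSet), j ∉ t.1 → ∀ x : V, B ⁅x, e j⁆ (z t) = 0 := fun j t ht =>
    hvan j _ (fun l h => by
      rw [hzz, if_neg]
      rintro rfl
      exact ht (Sym2.mem_mk_right _ _)) (fun l h => by rw [hsymm, hzw])
  have hvw : ∀ j (t : G.edgeSet), j ∉ t.1 → ∀ x : V, B ⁅x, e j⁆ (w t) = 0 := fun j t ht =>
    hvan j _ (fun l h => by rw [hzw]) (fun l h => by
      rw [hww, if_neg]
      rintro rfl
      exact ht (Sym2.mem_mk_right _ _))
  have hcz : ∀ i j, ∀ h : G.Adj i j, ∀ x : V,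
      B ⁅x, e j⁆ (z ⟨s(i, j), G.mem_edgeSet.mpr h⟩) = σ i j * B x (e i) := by
    intro i j h x
    have := hext (L j (z ⟨s(i, j), G.mem_edgeSet.mpr h⟩)) (σ i j • B (e i)) ?_ ?_ ?_ ?_ x
    · rw [hL] at this
      rw [this, hsymm x]; rfl
    · intro k
      rw [hL, LinearMap.smul_apply, hee]
      by_cases h' : G.Adj k j
      · rw [b1 k j h', map_smul, LinearMap.smul_apply, hzz]
        by_cases hk : i = k
        · subst hk; simp
        · rw [if_neg hk, if_neg]
          · simp
          · intro hh
            have := congrArg Subtype.val hh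
            exact hk (Sym2.congr_left.mp this).symm
      · rw [(hnadj k j h').1, if_neg (by rintro rfl; exact h' h)]; simp
    · intro k
      rw [hL, LinearMap.smul_apply, hef]
      by_cases h' : G.Adj k j
      · rw [b2 k j h', map_smul, LinearMap.smul_apply, hsymm, hzw, smul_zero, smul_zero]
      · rw [(hnadj k j h').2.2.1]; simp
    · intro s; simp [hLz, hez]
    · intro s; simp [hLw, hew]
  have hcw : ∀ i j, ∀ h : G.Adj i j, ∀ x : V,
      B ⁅x, e j⁆ (w ⟨s(i, j), G.mem_edgeSet.mpr h⟩) = σ i j * B x (f i) := by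
    intro i j h x
    have := hext (L j (w ⟨s(i, j), G.mem_edgeSet.mpr h⟩)) (σ i j • B (f i)) ?_ ?_ ?_ ?_ x
    · rw [hL] at this
      rw [this, hsymm x]; rfl
    · intro k
      rw [hL, LinearMap.smul_apply, hsymm (f i), hef]
      by_cases h' : G.Adj k j
      · rw [b1 k j h', map_smul, LinearMap.smul_apply, hzw, smul_zero, smul_zero]
      · rw [(hnadj k j h').1]; simp
    · intro k
      rw [hL, LinearMap.smul_apply, hff]
      by_cases h' : G.Adj k j
      · rw [b2 k j h', map_smul, LinearMap.smul_apply, hww]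
        by_cases hk : i = k
        · subst hk; simp
        · rw [if_neg hk, if_neg]
          · simp
          · intro hh
            have := congrArg Subtype.val hh
            exact hk (Sym2.congr_left.mp this).symm
      · rw [(hnadj k j h').2.2.1, if_neg (by rintro rfl; exact h' h)]; simp
    · intro s; simp [hLz, hfz]
    · intro s; simp [hLw, hfw]
  -- I is an isometry
  have hiso : ∀ x, B (I x) (I x) = B x x := fun x => by
    rw [hIskew, hI2]; simp
  have hskew0 : ∀ x, B (I x) x = 0 := fun x => by
    have h1 := hIskew x x
    rw [hsymm x (I x)] at h1
    linarith
  -- the image of an edge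
  have hedge : ∀ i j, ∀ h : G.Adj i j, i < j →
      I (z ⟨s(i, j), G.mem_edgeSet.mpr h⟩) =
        B (I (e i)) (f i) • w ⟨s(i, j), G.mem_edgeSet.mpr h⟩ ∧
      B (I (e i)) (f i) = B (I (e j)) (f j) := by
    intro i j h hl
    have e1 : I (z ⟨s(i, j), G.mem_edgeSet.mpr h⟩) = ⁅I (e i), e j⁆ := by
      rw [← hbee i j h hl, hIbi]
    have e2 : I (z ⟨s(i, j), G.mem_edgeSet.mpr h⟩) = -⁅I (e j), e i⁆ := by
      rw [← hbee i j h hl, ← lie_skew, map_neg, hIbi]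
    constructor
    · apply hvec
      · intro k
        rw [e1, hve, map_smul, LinearMap.smul_apply, hsymm (w _), hew]; simp
      · intro k
        rw [e1, hvf, map_smul, LinearMap.smul_apply, hsymm (w _), hfw]; simp
      · intro t
        rw [map_smul, LinearMap.smul_apply, hsymm (w _), hzw, smul_zero]
        by_cases hj : j ∈ t.1
        · by_cases hi : i ∈ t.1
          · have ht : t = ⟨s(i, j), G.mem_edgeSet.mpr h⟩ :=
              Subtype.ext ((Sym2.mem_and_mem_iff h.ne).mp ⟨hi, hj⟩)
            rw [ht, hskew0]
          · rw [e2, map_neg, LinearMap.neg_apply, hvz i t hi, neg_zero]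
        · rw [e1, hvz j t hj]
      · intro t
        rw [map_smul, LinearMap.smul_apply, hww]
        by_cases ht : (⟨s(i, j), G.mem_edgeSet.mpr h⟩ : G.edgeSet) = t
        · subst ht
          rw [e1, hcw i j h, hσ i j hl]; simp
        · rw [if_neg ht, smul_zero]
          by_cases hj : j ∈ t.1
          · by_cases hi : i ∈ t.1
            · exact absurd (Subtype.ext ((Sym2.mem_and_mem_iff h.ne).mp ⟨hi, hj⟩).symm) ht
            · rw [e2, map_neg, LinearMap.neg_apply, hvw i t hi, neg_zero]
          · rw [e1, hvw j t hj]
    · have h1 := hcw i j h (I (e i))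
      have h2 := hcw j i h.symm (I (e j))
      rw [← hswap i j h, hσ' j i hl] at h2
      rw [← e1, hσ i j hl] at h1
      have h3 : ⁅I (e j), e i⁆ = -I (z ⟨s(i, j), G.mem_edgeSet.mpr h⟩) := by rw [e2, neg_neg]
      rw [h3, map_neg, LinearMap.neg_apply] at h2
      linarith
  have hex : ∀ s : G.edgeSet, ∃ i j, ∃ h : G.Adj i j, i < j ∧
      s = ⟨s(i, j), G.mem_edgeSet.mpr h⟩ := by
    rintro ⟨s, hs⟩
    induction s using Sym2.ind with
    | _ i j =>
      have h : G.Adj i j := G.mem_edgeSet.mp hs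
      rcases lt_or_gt_of_ne h.ne with hl | hl
      · exact ⟨i, j, h, hl, rfl⟩
      · exact ⟨j, i, h.symm, hl, hswap i j h⟩
  have hadj : ∀ i j, G.Adj i j → B (I (e i)) (f i) = B (I (e j)) (f j) := by
    intro i j h
    rcases lt_or_gt_of_ne h.ne with hl | hl
    · exact (hedge i j h hl).2
    · exact (hedge j i h.symm hl).2.symm
  have hconst : ∀ i j, B (I (e i)) (f i) = B (I (e j)) (f j) := by
    intro i j
    obtain ⟨p⟩ := hconn.preconnected i j
    induction p with
    | nil => rfl
    | cons h _ ih => exact (hadj _ _ h).trans ih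
  obtain ⟨s0, hs0⟩ := hE
  obtain ⟨i0, j0, h0, hl0, -⟩ := hex ⟨s0, hs0⟩
  obtain ⟨b, hb⟩ : ∃ b, b = B (I (e i0)) (f i0) := ⟨_, rfl⟩
  have hβ : ∀ i, B (I (e i)) (f i) = b := fun i => by rw [hb]; exact hconst _ _
  have hz : ∀ s, I (z s) = b • w s := by
    intro s
    obtain ⟨i, j, h, hl, rfl⟩ := hex s
    rw [(hedge i j h hl).1, hβ]
  have hb2 : b * b = 1 := by
    have h1 := hiso (z ⟨s0, hs0⟩)
    rw [hz, hzz] at h1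
    simpa [hww] using h1
  have he : ∀ i, I (e i) = b • f i := by
    intro i
    by_contra hne
    have h := hpos _ (sub_ne_zero.mpr hne)
    have h1 : B (I (e i)) (I (e i)) = 1 := by rw [hiso, hee]; simp
    have h2 : B (f i) (I (e i)) = b := by rw [hsymm, hβ]
    simp only [map_sub, LinearMap.sub_apply, map_smul, LinearMap.smul_apply, smul_eq_mul,
      h1, h2, hβ, hff, if_true] at h
    linarith
  have hf : ∀ i, I (f i) = -(b • e i) := by
    intro i
    have h1 : f i = b • I (e i) := by rw [he, smul_smul, hb2, one_smul]
    rw [h1, map_smul, hI2, smul_neg]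
  have hw : ∀ s, I (w s) = -(b • z s) := by
    intro i
    have h1 : w i = b • I (z i) := by rw [hz, smul_smul, hb2, one_smul]
    rw [h1, map_smul, hI2, smul_neg]
  rcases mul_self_eq_one_iff.mp hb2 with h | h
  · left
    simp [he, hf, hz, hw, h]
  · right
    simp [he, hf, hz, hw, h]
end

section
/- Fix n ≥ 2 and let 𝔥 be the real Lie algebra of dimension 4n+2 (the real Lie algebra underlying the complex Heisenberg Lie algebra 𝔥_{2n+1}(ℂ)) with basis {x_i, u_i, y_i, v_i : 1 ≤ i ≤ n} ∪ {z, w} and Lie bracket determined by ⁅x_i, y_i⁆ = z, ⁅x_i, v_i⁆ = ⁅u_i, y_i⁆ = w, ⁅u_i, v_i⁆ = −z for each i, all other brackets of basis vectors being zero. Equip 𝔥 with the inner product making this basis orthonormal (the canonical H-type Hermitian metric). Then the space of Killing–Yano tensors on (𝔥, ⟨·,·⟩) is one-dimensional: every Killing–Yano tensor is a·T₀ for a unique a ∈ ℝ, where T₀x_i = u_i, T₀u_i = −x_i, T₀y_i = v_i, T₀v_i = −y_i, T₀z = 3w, T₀w = −3z. -/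
set_option maxHeartbeats 4000000
set_option linter.unusedSimpArgs false

/-- the real Lie algebra underlying the complex Heisenberg Lie algebra
𝔥_{2n+1}(ℂ) (n ≥ 2), with its canonical H-type Hermitian metric, has a
one-dimensional space of KY tensors, spanned by T₀ with T₀x_i = u_i, T₀u_i = -x_i,
T₀y_i = v_i, T₀v_i = -y_i, T₀z = 3w, T₀w = -3z. -/
theorem statement_17 (n : ℕ) (hn : 2 ≤ n)
    (V : Type*) [LieRing V] [LieAlgebra ℝ V]
    (B : V →ₗ[ℝ] V →ₗ[ℝ] ℝ)
    (hsymm : ∀ a b : V, B a b = B b a) (hpos : ∀ a : V, a ≠ 0 → 0 < B a a)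
    (x u y v : Fin n → V) (z w : V)
    -- the basis {x i, u i, y i, v i, z, w} is orthonormal
    (hxx : ∀ i j, B (x i) (x j) = if i = j then 1 else 0)
    (huu : ∀ i j, B (u i) (u j) = if i = j then 1 else 0)
    (hyy : ∀ i j, B (y i) (y j) = if i = j then 1 else 0)
    (hvv : ∀ i j, B (v i) (v j) = if i = j then 1 else 0)
    (hxu : ∀ i j, B (x i) (u j) = 0) (hxy : ∀ i j, B (x i) (y j) = 0)
    (hxv : ∀ i j, B (x i) (v j) = 0) (huy : ∀ i j, B (u i) (y j) = 0)
    (huv : ∀ i j, B (u i) (v j) = 0) (hyv : ∀ i j, B (y i) (v j) = 0)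
    (hxz : ∀ i, B (x i) z = 0) (hxw : ∀ i, B (x i) w = 0)
    (huz : ∀ i, B (u i) z = 0) (huw : ∀ i, B (u i) w = 0)
    (hyz : ∀ i, B (y i) z = 0) (hyw : ∀ i, B (y i) w = 0)
    (hvz : ∀ i, B (v i) z = 0) (hvw : ∀ i, B (v i) w = 0)
    (hz1 : B z z = 1) (hw1 : B w w = 1) (hzw : B z w = 0)
    -- ... and spans V
    (hspan : Submodule.span ℝ
      (Set.range x ∪ Set.range u ∪ Set.range y ∪ Set.range v ∪ {z, w}) = ⊤)
    -- the bracket relations of 𝔥_{2n+1}(ℂ) viewed as a real Lie algebra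
    (hb1 : ∀ i, ⁅x i, y i⁆ = z) (hb2 : ∀ i, ⁅x i, v i⁆ = w)
    (hb3 : ∀ i, ⁅u i, y i⁆ = w) (hb4 : ∀ i, ⁅u i, v i⁆ = -z)
    (hbxx : ∀ i j, ⁅x i, x j⁆ = 0) (hbuu : ∀ i j, ⁅u i, u j⁆ = 0)
    (hbyy : ∀ i j, ⁅y i, y j⁆ = 0) (hbvv : ∀ i j, ⁅v i, v j⁆ = 0)
    (hbxu : ∀ i j, ⁅x i, u j⁆ = 0) (hbyv : ∀ i j, ⁅y i, v j⁆ = 0)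
    (hbxy : ∀ i j, i ≠ j → ⁅x i, y j⁆ = 0)
    (hbxv : ∀ i j, i ≠ j → ⁅x i, v j⁆ = 0)
    (hbuy : ∀ i j, i ≠ j → ⁅u i, y j⁆ = 0)
    (hbuv : ∀ i j, i ≠ j → ⁅u i, v j⁆ = 0)
    (hzc : IsCentral z) (hwc : IsCentral w) :
    (∀ a : ℝ, ∃ T : V →ₗ[ℝ] V, IsKY B T ∧
        (∀ i, T (x i) = a • u i) ∧ (∀ i, T (u i) = -(a • x i)) ∧
        (∀ i, T (y i) = a • v i) ∧ (∀ i, T (v i) = -(a • y i)) ∧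
        T z = (3 * a) • w ∧ T w = -((3 * a) • z)) ∧
    (∀ T : V →ₗ[ℝ] V, IsKY B T → ∃! a : ℝ,
        (∀ i, T (x i) = a • u i) ∧ (∀ i, T (u i) = -(a • x i)) ∧
        (∀ i, T (y i) = a • v i) ∧ (∀ i, T (v i) = -(a • y i)) ∧
        T z = (3 * a) • w ∧ T w = -((3 * a) • z)) := by
  have ext : ∀ (f g : V →ₗ[ℝ] V),
      (∀ i, f (x i) = g (x i)) → (∀ i, f (u i) = g (u i)) → (∀ i, f (y i) = g (y i)) →
      (∀ i, f (v i) = g (v i)) → f z = g z → f w = g w → ∀ p, f p = g p := by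
    intro f g h1 h2 h3 h4 h5 h6 p
    have : f = g := by
      refine LinearMap.ext_on hspan ?_
      rintro q ((((⟨i, rfl⟩ | ⟨i, rfl⟩) | ⟨i, rfl⟩) | ⟨i, rfl⟩) | rfl | rfl)
      exacts [h1 i, h2 i, h3 i, h4 i, h5, h6]
    rw [this]
  have hux : ∀ i j, B (u i) (x j) = 0 := fun i j => by rw [hsymm]; exact hxu j i
  have hyx : ∀ i j, B (y i) (x j) = 0 := fun i j => by rw [hsymm]; exact hxy j i
  have hvx : ∀ i j, B (v i) (x j) = 0 := fun i j => by rw [hsymm]; exact hxv j i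
  have hyu : ∀ i j, B (y i) (u j) = 0 := fun i j => by rw [hsymm]; exact huy j i
  have hvu : ∀ i j, B (v i) (u j) = 0 := fun i j => by rw [hsymm]; exact huv j i
  have hvy : ∀ i j, B (v i) (y j) = 0 := fun i j => by rw [hsymm]; exact hyv j i
  have hzx : ∀ i, B z (x i) = 0 := fun i => by rw [hsymm]; exact hxz i
  have hwx : ∀ i, B w (x i) = 0 := fun i => by rw [hsymm]; exact hxw i
  have hzu : ∀ i, B z (u i) = 0 := fun i => by rw [hsymm]; exact huz i
  have hwu : ∀ i, B w (u i) = 0 := fun i => by rw [hsymm]; exact huw i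
  have hzy : ∀ i, B z (y i) = 0 := fun i => by rw [hsymm]; exact hyz i
  have hwy : ∀ i, B w (y i) = 0 := fun i => by rw [hsymm]; exact hyw i
  have hzv : ∀ i, B z (v i) = 0 := fun i => by rw [hsymm]; exact hvz i
  have hwv : ∀ i, B w (v i) = 0 := fun i => by rw [hsymm]; exact hvw i
  have hwz : B w z = 0 := by rw [hsymm]; exact hzw
  have cxy : ∀ i j, ⁅x i, y j⁆ = if i = j then z else 0 := by
    intro i j
    split_ifs with h
    · rw [← h, hb1]
    · exact hbxy i j h
  have cyx : ∀ i j, ⁅y i, x j⁆ = if i = j then -z else 0 := by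
    intro i j
    rw [← lie_skew, cxy]
    by_cases h : i = j
    · simp [h]
    · simp [h, Ne.symm h]
  have cxv : ∀ i j, ⁅x i, v j⁆ = if i = j then w else 0 := by
    intro i j
    split_ifs with h
    · rw [← h, hb2]
    · exact hbxv i j h
  have cvx : ∀ i j, ⁅v i, x j⁆ = if i = j then -w else 0 := by
    intro i j
    rw [← lie_skew, cxv]
    by_cases h : i = j
    · simp [h]
    · simp [h, Ne.symm h]
  have cuy : ∀ i j, ⁅u i, y j⁆ = if i = j then w else 0 := by
    intro i j
    split_ifs with h
    · rw [← h, hb3]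
    · exact hbuy i j h
  have cyu : ∀ i j, ⁅y i, u j⁆ = if i = j then -w else 0 := by
    intro i j
    rw [← lie_skew, cuy]
    by_cases h : i = j
    · simp [h]
    · simp [h, Ne.symm h]
  have cuv : ∀ i j, ⁅u i, v j⁆ = if i = j then -z else 0 := by
    intro i j
    split_ifs with h
    · rw [← h, hb4]
    · exact hbuv i j h
  have cvu : ∀ i j, ⁅v i, u j⁆ = if i = j then z else 0 := by
    intro i j
    rw [← lie_skew, cuv]
    by_cases h : i = j
    · simp [h]
    · simp [h, Ne.symm h]
  have cux : ∀ i j, ⁅u i, x j⁆ = 0 := fun i j => by rw [← lie_skew, hbxu, neg_zero]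
  have cvy : ∀ i j, ⁅v i, y j⁆ = 0 := fun i j => by rw [← lie_skew, hbyv, neg_zero]
  have zl : ∀ q : V, ⁅z, q⁆ = 0 := hzc
  have wl : ∀ q : V, ⁅w, q⁆ = 0 := hwc
  have zr : ∀ q, ⁅q, z⁆ = 0 := fun q => by rw [← lie_skew, zl, neg_zero]
  have wr : ∀ q, ⁅q, w⁆ = 0 := fun q => by rw [← lie_skew, wl, neg_zero]
  -- expansion of an element in the orthonormal basis
  have expand : ∀ p : V, p = (∑ i, (B (x i) p) • x i) + (∑ i, (B (u i) p) • u i)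
      + (∑ i, (B (y i) p) • y i) + (∑ i, (B (v i) p) • v i) + B z p • z + B w p • w := by
    intro p
    have := ext LinearMap.id
      ((∑ i, (B (x i)).smulRight (x i)) + (∑ i, (B (u i)).smulRight (u i))
        + (∑ i, (B (y i)).smulRight (y i)) + (∑ i, (B (v i)).smulRight (v i))
        + (B z).smulRight z + (B w).smulRight w)
      (by intro i; simp [hux, hyx, hvx, hzx, hwx, hxx])
      (by intro i; simp [hxu, hyu, hvu, hzu, hwu, huu])
      (by intro i; simp [hxy, huy, hvy, hzy, hwy, hyy])
      (by intro i; simp [hxv, huv, hyv, hzv, hwv, hvv])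
      (by simp [hxz, huz, hyz, hvz, hwz, hz1])
      (by simp [hxw, huw, hyw, hvw, hzw, hw1]) p
    simpa using this
  -- brackets with the y i and v i, x i, u i recover coordinates
  have bry : ∀ p i, ⁅p, y i⁆ = B (x i) p • z + B (u i) p • w := by
    intro p i
    conv_lhs => rw [expand p]
    simp [sum_lie, cxy, cuy, hbyy, cvy, zl, wl]
  have brx : ∀ p i, ⁅p, x i⁆ = -(B (y i) p • z + B (v i) p • w) := by
    intro p i
    conv_lhs => rw [expand p]
    simp [sum_lie, hbxx, cux, cyx, cvx, zl, wl]
    abel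
  have cent : ∀ p, IsCentral p → p = B z p • z + B w p • w := by
    intro p hp
    have key : ∀ s t : ℝ, s • z + t • w = 0 → s = 0 ∧ t = 0 := by
      intro s t h
      have h1 := congrArg (B z) h
      have h2 := congrArg (B w) h
      simp [hz1, hw1, hzw, hwz] at h1 h2
      exact ⟨h1, h2⟩
    have h1 : ∀ i, B (x i) p = 0 ∧ B (u i) p = 0 := fun i =>
      key _ _ (by rw [← bry, hp])
    have h2 : ∀ i, B (y i) p = 0 ∧ B (v i) p = 0 := fun i =>
      key _ _ (by rw [← neg_eq_zero, ← brx, hp])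
    have := expand p
    simpa [fun i => (h1 i).1, fun i => (h1 i).2, fun i => (h2 i).1, fun i => (h2 i).2] using this
  have centmk : ∀ s t : ℝ, IsCentral (s • z + t • w) := by
    intro s t q
    simp [zl, wl]
  constructor
  · intro a
    have TE : ∃ T : V →ₗ[ℝ] V, ∀ p, T p = a • ((∑ i, (B (x i) p) • u i)
        - (∑ i, (B (u i) p) • x i) + (∑ i, (B (y i) p) • v i) - (∑ i, (B (v i) p) • y i)
        + (3 * B z p) • w - (3 * B w p) • z) := by
      refine ⟨a • ((∑ i, (B (x i)).smulRight (u i)) - (∑ i, (B (u i)).smulRight (x i))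
        + (∑ i, (B (y i)).smulRight (v i)) - (∑ i, (B (v i)).smulRight (y i))
        + (3 : ℝ) • (B z).smulRight w - (3 : ℝ) • (B w).smulRight z), ?_⟩
      intro p
      simp [mul_smul]
    obtain ⟨T, hT⟩ := TE
    have Tx : ∀ i, T (x i) = a • u i := by intro i; rw [hT]; simp [hux, hyx, hvx, hzx, hwx, hxx]
    have Tu : ∀ i, T (u i) = -(a • x i) := by intro i; rw [hT]; simp [hxu, hyu, hvu, hzu, hwu, huu]
    have Ty : ∀ i, T (y i) = a • v i := by intro i; rw [hT]; simp [hxy, huy, hvy, hzy, hwy, hyy]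
    have Tv : ∀ i, T (v i) = -(a • y i) := by intro i; rw [hT]; simp [hxv, huv, hyv, hzv, hwv, hvv]
    have Tz : T z = (3 * a) • w := by
      rw [hT]; simp [hxz, huz, hyz, hvz, hz1, hwz, smul_smul, mul_comm]
    have Tw : T w = -((3 * a) • z) := by
      rw [hT]; simp [hxw, huw, hyw, hvw, hw1, hzw, smul_smul, mul_comm]
    refine ⟨T, ⟨?_, ?_, ?_⟩, Tx, Tu, Ty, Tv, Tz, Tw⟩
    · intro p q
      rw [hT p, hT q]
      simp only [map_smul, map_add, map_sub, map_sum, LinearMap.add_apply, LinearMap.sub_apply,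
        LinearMap.smul_apply, LinearMap.sum_apply, smul_eq_mul]
      simp only [hsymm p (x _), hsymm p (u _), hsymm p (y _), hsymm p (v _), hsymm p z, hsymm p w,
        mul_comm (B (x _) q), mul_comm (B (u _) q), mul_comm (B (y _) q), mul_comm (B (v _) q)]
      ring
    · intro p hp
      rw [cent p hp, map_add, map_smul, map_smul, Tz, Tw]
      intro q
      simp [zl, wl]
    · intro p q _ _
      have step : ∀ b : V, (∀ i, T ⁅b, x i⁆ = (3 : ℝ) • ⁅b, T (x i)⁆) →
          (∀ i, T ⁅b, u i⁆ = (3 : ℝ) • ⁅b, T (u i)⁆) →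
          (∀ i, T ⁅b, y i⁆ = (3 : ℝ) • ⁅b, T (y i)⁆) →
          (∀ i, T ⁅b, v i⁆ = (3 : ℝ) • ⁅b, T (v i)⁆) →
          T ⁅b, z⁆ = (3 : ℝ) • ⁅b, T z⁆ → T ⁅b, w⁆ = (3 : ℝ) • ⁅b, T w⁆ →
          ∀ p, T ⁅p, b⁆ = (3 : ℝ) • ⁅T p, b⁆ := by
        intro b h1 h2 h3 h4 h5 h6 p
        have := ext (T ∘ₗ (LieAlgebra.ad ℝ V b))
          ((3 : ℝ) • ((LieAlgebra.ad ℝ V b) ∘ₗ T))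
          h1 h2 h3 h4 h5 h6 p
        have h : T ⁅b, p⁆ = (3 : ℝ) • ⁅b, T p⁆ := this
        rw [← lie_skew, map_neg, h, ← lie_skew (T p) b, smul_neg]
      refine ext (T ∘ₗ (LieAlgebra.ad ℝ V p))
          ((3 : ℝ) • (LieAlgebra.ad ℝ V (T p))) ?_ ?_ ?_ ?_ ?_ ?_ q
      iterate 4
        intro i
        refine step _ ?_ ?_ ?_ ?_ ?_ ?_ p
        iterate 4
          intro j
          simp only [Tx, Tu, Ty, Tv, Tz, Tw, lie_smul, lie_neg, cxy, cyx, cxv, cvx, cuy, cyu, cuv, cvu, hbxx, hbuu, hbyy, hbvv, hbxu, cux, hbyv, cvy, zl, wl, zr, wr]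
          (try split_ifs) <;> simp [Tx, Tu, Ty, Tv, Tz, Tw, smul_smul]
        iterate 2 simp [Tx, Tu, Ty, Tv, Tz, Tw, cxy, cyx, cxv, cvx, cuy, cyu, cuv, cvu, hbxx, hbuu, hbyy, hbvv, hbxu, cux, hbyv, cvy, zl, wl, zr, wr]
      iterate 2
        refine step _ ?_ ?_ ?_ ?_ ?_ ?_ p <;> simp [Tx, Tu, Ty, Tv, Tz, Tw, cxy, cyx, cxv, cvx, cuy, cyu, cuv, cvu, hbxx, hbuu, hbyy, hbvv, hbxu, cux, hbyv, cvy, zl, wl, zr, wr]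
  · rintro T ⟨hsk, hTc, hKY⟩
    have zeroOf : ∀ d, InVperp B d → (∀ i, ⁅d, x i⁆ = 0) → (∀ i, ⁅d, u i⁆ = 0) →
        (∀ i, ⁅d, y i⁆ = 0) → (∀ i, ⁅d, v i⁆ = 0) → d = 0 := by
      intro d hd h1 h2 h3 h4
      have hc : IsCentral d := fun q =>
        ext (LieAlgebra.ad ℝ V d) 0 h1 h2 h3 h4 (zr d) (wr d) q
      by_contra hne
      exact (hpos d hne).ne' (hd d hc)
    have skz : ∀ p, B p (T p) = 0 := by
      intro p
      have h1 := hsk p p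
      rw [hsymm] at h1
      linarith
    have Tz0 : T z = B w (T z) • w := by
      have := cent _ (hTc z hzc)
      rwa [skz, zero_smul, zero_add] at this
    have Tw0 : T w = -(B w (T z) • z) := by
      have := cent _ (hTc w hwc)
      rw [skz, zero_smul, add_zero] at this
      rw [this, ← neg_smul]
      congr 1
      rw [hsymm, hsk, hsymm]
    obtain ⟨a, ha⟩ : ∃ a : ℝ, B w (T z) = 3 * a := ⟨B w (T z) / 3, by ring⟩
    rw [ha] at Tz0 Tw0
    have perp : ∀ p, B p z = 0 → B p w = 0 → InVperp B p := by
      intro p h1 h2 m hm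
      rw [cent m hm]
      simp [h1, h2]
    have px : ∀ i, InVperp B (x i) := fun i => perp _ (hxz i) (hxw i)
    have pu : ∀ i, InVperp B (u i) := fun i => perp _ (huz i) (huw i)
    have py : ∀ i, InVperp B (y i) := fun i => perp _ (hyz i) (hyw i)
    have pv : ∀ i, InVperp B (v i) := fun i => perp _ (hvz i) (hvw i)
    have pT : ∀ p, InVperp B p → InVperp B (T p) := by
      intro p hp m hm
      rw [hsk, hp _ (hTc m hm), neg_zero]
    have main : ∀ p p', InVperp B p → InVperp B p' →
        (∀ i, T ⁅p, x i⁆ = (3 : ℝ) • ⁅p', x i⁆) → (∀ i, T ⁅p, u i⁆ = (3 : ℝ) • ⁅p', u i⁆) →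
        (∀ i, T ⁅p, y i⁆ = (3 : ℝ) • ⁅p', y i⁆) → (∀ i, T ⁅p, v i⁆ = (3 : ℝ) • ⁅p', v i⁆) →
        T p = p' := by
      intro p p' hp hp' h1 h2 h3 h4
      have aux : ∀ q, InVperp B q → T ⁅p, q⁆ = (3 : ℝ) • ⁅p', q⁆ → ⁅T p - p', q⁆ = 0 := by
        intro q hq h
        rw [hKY p q hp hq] at h
        rw [sub_lie, sub_eq_zero]
        exact smul_right_injective V (three_ne_zero : (3 : ℝ) ≠ 0) h
      refine sub_eq_zero.mp (zeroOf _ ?_ (fun i => aux _ (px i) (h1 i))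
        (fun i => aux _ (pu i) (h2 i)) (fun i => aux _ (py i) (h3 i)) (fun i => aux _ (pv i) (h4 i)))
      intro m hm
      rw [map_sub, LinearMap.sub_apply, pT p hp m hm, hp' m hm, sub_zero]
    refine ⟨a, ⟨?_, ?_, ?_, ?_, Tz0, Tw0⟩, ?_⟩
    · intro i
      refine main _ _ (px i) (perp _ (by simp [huz]) (by simp [huw])) ?_ ?_ ?_ ?_
      all_goals
        intro j
        simp only [smul_lie, neg_lie, cxy, cyx, cxv, cvx, cuy, cyu, cuv, cvu, hbxx, hbuu, hbyy, hbvv, hbxu, cux, hbyv, cvy, zl, wl, zr, wr]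
        (try split_ifs) <;> simp [Tz0, Tw0, smul_smul]
    · intro i
      refine main _ _ (pu i) (perp _ (by simp [hxz]) (by simp [hxw])) ?_ ?_ ?_ ?_
      all_goals
        intro j
        simp only [smul_lie, neg_lie, cxy, cyx, cxv, cvx, cuy, cyu, cuv, cvu, hbxx, hbuu, hbyy, hbvv, hbxu, cux, hbyv, cvy, zl, wl, zr, wr]
        (try split_ifs) <;> simp [Tz0, Tw0, smul_smul]
    · intro i
      refine main _ _ (py i) (perp _ (by simp [hvz]) (by simp [hvw])) ?_ ?_ ?_ ?_
      all_goals
        intro j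
        simp only [smul_lie, neg_lie, cxy, cyx, cxv, cvx, cuy, cyu, cuv, cvu, hbxx, hbuu, hbyy, hbvv, hbxu, cux, hbyv, cvy, zl, wl, zr, wr]
        (try split_ifs) <;> simp [Tz0, Tw0, smul_smul]
    · intro i
      refine main _ _ (pv i) (perp _ (by simp [hyz]) (by simp [hyw])) ?_ ?_ ?_ ?_
      all_goals
        intro j
        simp only [smul_lie, neg_lie, cxy, cyx, cxv, cvx, cuy, cyu, cuv, cvu, hbxx, hbuu, hbyy, hbvv, hbxu, cux, hbyv, cvy, zl, wl, zr, wr]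
        (try split_ifs) <;> simp [Tz0, Tw0, smul_smul]
    · rintro b ⟨-, -, -, -, hb, -⟩
      have := congrArg (B w) hb
      rw [ha] at this
      simp [hw1] at this
      exact this.symm
end
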